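/- Let m:ℕ→ℕ satisfy m(n) ≤ 3n−6 and m(n) = 3n − o(n) as n→∞ (that is, (3n−m(n))/n → 0). Then the probability that P_{n,m(n)} is connected tends to 1 as n→∞. -/

import Mathlib

/-!
The proof is a switching argument. Write `d = 3n - m`, so `d = o(n)`, and fix the constant
`C = 1224`. All facts about planar graphs are derived from the exclusion of `K₅` and `K₃,₃`
as minors.

* A planar graph on `n ≥ 3` vertices has at most `3n - 6` edges (`planar_edge_bound`), by Mader's
  induction: contract an edge lying in few triangles, or find a `K₅`-minor. Hence every nonempty
  vertex set contains a vertex with at most six neighbours inside it (`exists_low_degree`).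
* Only `O(d)` edges between vertices of degree at most `C` lie in no triangle (`sparseDarts_bound`):
  contracting such an edge loses one vertex but only one edge, so it lowers `3n - m ≥ 0` by two, and
  it affects only boundedly many other such edges.
* A vertex `x` is good if its degree is at most `C` and it lies in a triangle `x, a, y` with `a` of
  degree at most `C` too. At least `(n - O(d)) / C` vertices are good (`goodVertices_bound`), because
  few vertices have degree above `C`, the graph has nearly `3n` edges, and few edges avoid triangles.

Let `G` be disconnected, `x` a good vertex with triangle `x, a, y`, and `v` a vertex of degree at
most six in another component. Replacing the edge `xy` by `xv` keeps the number of edges, and it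
keeps planarity since joining two components by an edge creates neither minor (`IsPlanar.join`).
In the new graph `xv` is an edge in no triangle between vertices of degree at most `C`, so there are
`O(d)` choices for it, and `y` is recovered by walking from `x` to a neighbour `a` and then to a
neighbour of `a`, with at most `C²` choices. Thus (number of disconnected graphs) times
`n / (4C)` is at most `O(d)` times the number of all graphs (`disconnected_mul_le`), and the
proportion of disconnected graphs is `O(d / n)`. The set of all graphs is nonempty because the join
of an edge and a path is planar with `3n - 6` edges (`planarSet_nonempty`).
-/


open SimpleGraph Filter Asymptotics

/-- `H` is a minor of `G`: to each vertex of `H` we can assign a connected nonempty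
branch set in `G`, pairwise disjoint, with an edge of `G` between the branch sets of
any two adjacent vertices of `H`. -/
def IsMinor {α β : Type*} (H : SimpleGraph α) (G : SimpleGraph β) : Prop :=
  ∃ f : α → Set β,
    (∀ a, (G.induce (f a)).Connected) ∧
    (∀ a b, a ≠ b → Disjoint (f a) (f b)) ∧
    (∀ a b, H.Adj a b → ∃ u ∈ f a, ∃ v ∈ f b, G.Adj u v)

/-- A graph is planar iff it has neither a `K₅`-minor nor a `K₃,₃`-minor
(Wagner's theorem). -/
def IsPlanar {V : Type*} (G : SimpleGraph V) : Prop :=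
  ¬ IsMinor (completeGraph (Fin 5)) G ∧
    ¬ IsMinor (completeBipartiteGraph (Fin 3) (Fin 3)) G

/-- The number of edges of a graph. -/
noncomputable def edgeCount {V : Type*} (G : SimpleGraph V) : ℕ :=
  G.edgeSet.ncard

/-- The degree of a vertex. -/
noncomputable def vertexDegree {V : Type*} (G : SimpleGraph V) (v : V) : ℕ :=
  (G.neighborSet v).ncard

/-- `𝒫(n,m)`: the set of labelled planar graphs on `{1,…,n}` with exactly `m` edges. -/
def planarSet (n m : ℕ) : Set (SimpleGraph (Fin n)) :=
  {G | IsPlanar G ∧ edgeCount G = m}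

/-- The probability that the uniform random planar graph `P_{n,m}` satisfies `P`. -/
noncomputable def planarProb (n m : ℕ) (P : SimpleGraph (Fin n) → Prop) : ℝ :=
  ({G ∈ planarSet n m | P G}.ncard : ℝ) / ((planarSet n m).ncard : ℝ)

/-- The number of pendant edges (edges incident to a vertex of degree 1). -/
noncomputable def pendantCount {V : Type*} (G : SimpleGraph V) : ℕ :=
  {e ∈ G.edgeSet | ∃ v ∈ e, vertexDegree G v = 1}.ncard

/-- The set of addable non-edges of `G`: non-edges whose addition keeps the graph planar. -/
def addableSet {V : Type*} (G : SimpleGraph V) : Set (Sym2 V) :=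
  {e | ¬ e.IsDiag ∧ e ∉ G.edgeSet ∧ IsPlanar (G ⊔ SimpleGraph.fromEdgeSet {e})}

/-- `add(n,m)`: the minimum number of addable non-edges over all graphs in `𝒫(n,m)`. -/
noncomputable def addMin (n m : ℕ) : ℕ :=
  sInf ((fun G => (addableSet G).ncard) '' planarSet n m)

/-- `W` carries an induced order-preserving copy of `H` in `G`: the increasing bijection
from `{1,…,h}` to `W` is an isomorphism between `H` and the induced subgraph `G[W]`. -/
def IsOrderCopy {h n : ℕ} (H : SimpleGraph (Fin h)) (G : SimpleGraph (Fin n))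
    (W : Finset (Fin n)) : Prop :=
  ∃ hW : W.card = h,
    ∀ i j : Fin h,
      H.Adj i j ↔ G.Adj ((W.orderIsoOfFin hW i : Fin n)) ((W.orderIsoOfFin hW j : Fin n))

/-- `W` is the vertex set of a connected component of `G`. -/
def IsComponent {V : Type*} (G : SimpleGraph V) (W : Finset V) : Prop :=
  (G.induce (W : Set V)).Connected ∧ ∀ v ∈ W, ∀ u, G.Adj v u → u ∈ W

/-- The number of components of `G` admitting an order-preserving isomorphism to `H`. -/
noncomputable def numOrderComponents {h n : ℕ} (H : SimpleGraph (Fin h))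
    (G : SimpleGraph (Fin n)) : ℕ :=
  {W : Finset (Fin n) | IsComponent G W ∧ IsOrderCopy H G W}.ncard

/-- The number of distinct cycles (as subgraphs, identified with their edge sets) of
length at most `k` in `S`. -/
noncomputable def cycleCountLe {V : Type*} (S : SimpleGraph V) (k : ℕ) : ℕ :=
  {E : Set (Sym2 V) | ∃ (v : V) (c : S.Walk v v),
    c.IsCycle ∧ c.length ≤ k ∧ {e | e ∈ c.edges} = E}.ncard

/-! ### Minors -/

/-- Connectedness of an induced subgraph, phrased through sets closed under adjacency. -/
theorem induce_connected_iff {V : Type*} (G : SimpleGraph V) (s : Set V) :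
    (G.induce s).Connected ↔ s.Nonempty ∧ ∀ t : Set V, (∃ u ∈ s, u ∈ t) →
      (∀ u ∈ s, u ∈ t → ∀ w ∈ s, G.Adj u w → w ∈ t) → s ⊆ t := by
  constructor
  · intro h
    refine ⟨Set.nonempty_coe_sort.mp h.nonempty, ?_⟩
    rintro t ⟨u, hus, hut⟩ hcl w hw
    obtain ⟨p⟩ := h.preconnected ⟨u, hus⟩ ⟨w, hw⟩
    have key : ∀ (a b : s), (G.induce s).Walk a b → (a : V) ∈ t → (b : V) ∈ t := by
      intro a b p
      induction p with
      | nil => exact id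
      | @cons a b c hab _ ih => exact fun ha => ih (hcl a a.2 ha b b.2 hab)
    exact key _ _ p hut
  · rintro ⟨⟨u, hu⟩, h⟩
    rw [connected_iff_exists_forall_reachable]
    refine ⟨⟨u, hu⟩, ?_⟩
    have := h {w | ∃ hw : w ∈ s, (G.induce s).Reachable ⟨u, hu⟩ ⟨w, hw⟩}
      ⟨u, hu, hu, Reachable.refl _⟩ (by
        rintro a ha ⟨_, hra⟩ b hb hab
        refine ⟨hb, hra.trans (Adj.reachable ?_)⟩
        exact hab)
    rintro ⟨w, hw⟩
    exact (this hw).2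

theorem IsMinor.trans {α β γ : Type*} {K : SimpleGraph γ} {H : SimpleGraph α}
    {G : SimpleGraph β} (h1 : IsMinor K H) (h2 : IsMinor H G) : IsMinor K G := by
  obtain ⟨f, hf1, hf2, hf3⟩ := h1
  obtain ⟨g, hg1, hg2, hg3⟩ := h2
  simp only [induce_connected_iff] at hf1 hg1
  refine ⟨fun c => ⋃ a ∈ f c, g a, ?_, ?_, ?_⟩
  · intro c
    rw [induce_connected_iff]
    constructor
    · obtain ⟨a, ha⟩ := (hf1 c).1
      obtain ⟨b, hb⟩ := (hg1 a).1
      exact ⟨b, by simp only [Set.mem_iUnion]; exact ⟨a, ha, hb⟩⟩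
    · rintro t ⟨u, hu, hut⟩ hcl
      simp only [Set.mem_iUnion] at hu
      obtain ⟨a, ha, hua⟩ := hu
      have full : ∀ a ∈ f c, (∃ u ∈ g a, u ∈ t) → g a ⊆ t := by
        intro a ha hex
        refine (hg1 a).2 t hex ?_
        intro u hu hut w hw huw
        exact hcl u (by simp only [Set.mem_iUnion]; exact ⟨a, ha, hu⟩) hut w
          (by simp only [Set.mem_iUnion]; exact ⟨a, ha, hw⟩) huw
      have := (hf1 c).2 {a | g a ⊆ t} ⟨a, ha, full a ha ⟨u, hua, hut⟩⟩ (by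
        intro a ha hat b hb hab
        obtain ⟨u, hu, w, hw, huw⟩ := hg3 a b hab
        refine full b hb ⟨w, hw, ?_⟩
        exact hcl u (by simp only [Set.mem_iUnion]; exact ⟨a, ha, hu⟩) (hat hu) w
          (by simp only [Set.mem_iUnion]; exact ⟨b, hb, hw⟩) huw)
      simp only [Set.iUnion_subset_iff]
      intro a ha
      exact this ha
  · intro a b hab
    rw [Set.disjoint_left]
    intro u hu hu'
    simp only [Set.mem_iUnion] at hu hu'
    obtain ⟨i, hi, hui⟩ := hu
    obtain ⟨j, hj, huj⟩ := hu'
    by_cases hij : i = j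
    · subst hij
      exact Set.disjoint_left.mp (hf2 a b hab) hi hj
    · exact Set.disjoint_left.mp (hg2 i j hij) hui huj
  · intro a b hab
    obtain ⟨i, hi, j, hj, hij⟩ := hf3 a b hab
    obtain ⟨u, hu, w, hw, huw⟩ := hg3 i j hij
    exact ⟨u, by simp only [Set.mem_iUnion]; exact ⟨i, hi, hu⟩, w,
      by simp only [Set.mem_iUnion]; exact ⟨j, hj, hw⟩, huw⟩

theorem IsPlanar.of_minor {α β : Type*} {H : SimpleGraph α} {G : SimpleGraph β}
    (hG : IsPlanar G) (h : IsMinor H G) : IsPlanar H :=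
  ⟨fun h' => hG.1 (h'.trans h), fun h' => hG.2 (h'.trans h)⟩

theorem induce_singleton_connected {V : Type*} (G : SimpleGraph V) (v : V) :
    (G.induce ({v} : Set V)).Connected := by
  rw [induce_connected_iff]
  refine ⟨⟨v, rfl⟩, ?_⟩
  rintro t ⟨u, hu, hut⟩ -
  rw [Set.mem_singleton_iff] at hu
  subst hu
  simpa using hut

theorem isMinor_of_injective {α β : Type*} {H : SimpleGraph α} {G : SimpleGraph β}
    (φ : α → β) (hinj : Function.Injective φ) (hadj : ∀ a b, H.Adj a b → G.Adj (φ a) (φ b)) :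
    IsMinor H G :=
  ⟨fun a => {φ a}, fun a => induce_singleton_connected G _,
    fun a b hab => by simpa using fun h => hab (hinj h),
    fun a b hab => ⟨_, rfl, _, rfl, hadj a b hab⟩⟩

theorem IsPlanar.mono {V : Type*} {H G : SimpleGraph V} (hG : IsPlanar G) (h : H ≤ G) :
    IsPlanar H :=
  hG.of_minor (isMinor_of_injective id Function.injective_id fun _ _ hab => h hab)

theorem IsPlanar.induce {V : Type*} {G : SimpleGraph V} (hG : IsPlanar G) (s : Set V) :
    IsPlanar (G.induce s) :=
  hG.of_minor (isMinor_of_injective Subtype.val Subtype.val_injective fun _ _ hab => hab)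

/-- Contraction of the edge `xa`: the vertex `a` is deleted and `x` inherits its neighbours. -/
def contract {V : Type*} (G : SimpleGraph V) (x a : V) : SimpleGraph {v : V // v ≠ a} where
  Adj p q := p ≠ q ∧ (G.Adj p q ∨ ((p : V) = x ∧ G.Adj a q) ∨ ((q : V) = x ∧ G.Adj a p))
  symm := ⟨fun p q h => ⟨h.1.symm, by
    rcases h.2 with h | h | h
    · exact Or.inl h.symm
    · exact Or.inr (Or.inr h)
    · exact Or.inr (Or.inl h)⟩⟩
  loopless := ⟨fun p h => h.1 rfl⟩

theorem contract_isMinor {V : Type*} (G : SimpleGraph V) (x a : V) (h : G.Adj x a) :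
    IsMinor (contract G x a) G := by
  refine ⟨fun p => {u | u = p ∨ ((p : V) = x ∧ u = a)}, ?_, ?_, ?_⟩
  · rintro ⟨p, hp⟩
    rw [induce_connected_iff]
    refine ⟨⟨p, Or.inl rfl⟩, ?_⟩
    rintro t ⟨u, hu, hut⟩ hcl w hw
    simp only [Set.mem_ofPred_eq] at hu hw hcl
    have := h.symm
    grind
  · rintro ⟨p, hp⟩ ⟨q, hq⟩ hpq
    rw [Set.disjoint_left]
    intro u hu hu'
    simp only [Set.mem_ofPred_eq] at hu hu'
    grind
  · rintro ⟨p, hp⟩ ⟨q, hq⟩ ⟨_, hpq | hpq | hpq⟩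
    · exact ⟨p, Or.inl rfl, q, Or.inl rfl, hpq⟩
    · exact ⟨a, Or.inr ⟨hpq.1, rfl⟩, q, Or.inl rfl, hpq.2⟩
    · exact ⟨p, Or.inl rfl, a, Or.inr ⟨hpq.1, rfl⟩, hpq.2.symm⟩

/-! ### Degrees and edge counts -/

theorem sum_vertexDegree {V : Type*} [Fintype V] (G : SimpleGraph V) :
    ∑ v, vertexDegree G v = 2 * edgeCount G := by
  classical
  have := G.sum_degrees_eq_twice_card_edges
  unfold vertexDegree edgeCount
  rw [← coe_edgeFinset, Set.ncard_coe_finset, ← this]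
  refine Finset.sum_congr rfl fun v _ => ?_
  rw [Set.ncard_eq_toFinset_card', ← card_neighborFinset_eq_degree, neighborFinset]

/-- Contracting `xa` destroys that edge and one of each pair of edges towards a common
neighbour, nothing else. -/
theorem edgeCount_le_contract {V : Type*} [Finite V] (G : SimpleGraph V) (x a : V)
    (h : G.Adj x a) :
    edgeCount G ≤ edgeCount (contract G x a) + 1 + {w | G.Adj x w ∧ G.Adj a w}.ncard := by
  classical
  set L : Set (Sym2 V) := {s(x, a)} ∪ (fun w => s(a, w)) '' {w | G.Adj x w ∧ G.Adj a w} with hL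
  have hxa : x ≠ a := h.ne
  let π : V → {v : V // v ≠ a} := fun u => if hu : u = a then ⟨x, hxa⟩ else ⟨u, hu⟩
  have hπ : ∀ u, (π u : V) = if u = a then x else u := by
    intro u; simp only [π]; split_ifs <;> rfl
  have h1 : (G.edgeSet \ L).ncard ≤ edgeCount (contract G x a) := by
    refine Set.ncard_le_ncard_of_injOn (Sym2.map π) ?_ ?_ (Set.toFinite _)
    · intro e
      induction e with | _ u w
      rintro ⟨he, heL⟩
      simp only [hL, Set.mem_union, Set.mem_singleton_iff, Set.mem_image, Set.mem_ofPred_eq,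
        mem_edgeSet, Sym2.map_mk, contract, ne_eq, Subtype.ext_iff, hπ, Sym2.eq_iff] at he heL ⊢
      have := he.symm
      have := he.ne
      grind
    · intro e he e' he' hee
      induction e with | _ u w
      induction e' with | _ u' w'
      obtain ⟨he, heL⟩ := he
      obtain ⟨he', heL'⟩ := he'
      simp only [hL, Set.mem_union, Set.mem_singleton_iff, Set.mem_image, Set.mem_ofPred_eq,
        mem_edgeSet, Sym2.map_mk, ne_eq, Subtype.ext_iff, hπ, Sym2.eq_iff] at he heL he' heL' hee ⊢
      have := he.symm
      have := he.ne
      have := he'.symm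
      have := he'.ne
      grind
  have h2 : L.ncard ≤ 1 + {w | G.Adj x w ∧ G.Adj a w}.ncard := by
    refine (Set.ncard_union_le _ _).trans ?_
    rw [Set.ncard_singleton]
    exact Nat.add_le_add_left (Set.ncard_image_le (Set.toFinite _)) 1
  have h3 := Set.ncard_le_ncard_sdiff_add_ncard G.edgeSet L (Set.toFinite _)
  unfold edgeCount at *
  omega

/-! ### The bound `3n - 6` on the number of edges -/

theorem exists_subgraph_edgeCount {V : Type*} [Finite V] (G : SimpleGraph V) (k : ℕ)
    (hk : k ≤ edgeCount G) : ∃ H ≤ G, edgeCount H = k := by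
  obtain ⟨s, hs, hsk⟩ := Set.exists_subset_card_eq hk
  have hsE : (fromEdgeSet s).edgeSet = s := by
    rw [edgeSet_fromEdgeSet]
    ext e
    simp only [Set.mem_sdiff, and_iff_left_iff_imp]
    intro he
    exact G.not_isDiag_of_mem_edgeSet (hs he)
  refine ⟨fromEdgeSet s, ?_, ?_⟩
  · rw [← edgeSet_subset_edgeSet, hsE]
    exact hs
  · rw [edgeCount, hsE, hsk]

theorem ncard_edges_within_le {V : Type*} [Finite V] (G : SimpleGraph V) (U : Set V) :
    {e ∈ G.edgeSet | ∀ z ∈ e, z ∈ U}.ncard ≤ edgeCount (G.induce U) := by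
  have : {e ∈ G.edgeSet | ∀ z ∈ e, z ∈ U} ⊆
      Sym2.map (Subtype.val : U → V) '' (G.induce U).edgeSet := by
    intro e
    induction e with | _ u w
    rintro ⟨he, hU⟩
    refine ⟨s(⟨u, hU u (by simp)⟩, ⟨w, hU w (by simp)⟩), ?_, by simp⟩
    simpa using he
  exact (Set.ncard_le_ncard this (Set.toFinite _)).trans (Set.ncard_image_le (Set.toFinite _))

theorem K5_of_clique {V : Type*} (G : SimpleGraph V) (s : Finset V) (hs : s.card = 5)
    (hc : ∀ u ∈ s, ∀ w ∈ s, u ≠ w → G.Adj u w) : IsMinor (completeGraph (Fin 5)) G := by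
  let e := (s.equivFinOfCardEq hs).symm
  refine isMinor_of_injective (fun i => (e i : V)) (Subtype.val_injective.comp e.injective) ?_
  intro a b hab
  refine hc _ (e a).2 _ (e b).2 ?_
  intro h
  exact hab (e.injective (Subtype.ext h))

/-- Two adjacent vertices joined to a `4`-cycle `a c b d` yield `K₅` by contracting `bc`. -/
theorem K5_of_wheel {V : Type*} (G : SimpleGraph V) (v e a b c d : V)
    (hab : a ≠ b) (hcd : c ≠ d)
    (hve : G.Adj v e) (hva : G.Adj v a) (hvb : G.Adj v b) (hvc : G.Adj v c) (hvd : G.Adj v d)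
    (hea : G.Adj e a) (heb : G.Adj e b) (hec : G.Adj e c) (hed : G.Adj e d)
    (hac : G.Adj a c) (had : G.Adj a d) (hbc : G.Adj b c) (hbd : G.Adj b d) :
    IsMinor (completeGraph (Fin 5)) G := by
  have := hve.ne; have := hva.ne; have := hvb.ne; have := hvc.ne; have := hvd.ne
  have := hea.ne; have := heb.ne; have := hec.ne; have := hed.ne
  have := hac.ne; have := had.ne; have := hbc.ne; have := hbd.ne
  have pair : (G.induce ({b, c} : Set V)).Connected := by
    rw [induce_connected_iff]
    refine ⟨⟨b, by simp⟩, ?_⟩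
    rintro t ⟨u, hu, hut⟩ hcl w hw
    simp only [Set.mem_insert_iff, Set.mem_singleton_iff] at hu hw hcl
    have := hbc.symm
    grind
  have sym : ∀ f : Fin 5 → Set V, (∀ i j : Fin 5, i < j → ∃ u ∈ f i, ∃ v ∈ f j, G.Adj u v) →
      ∀ i j, i ≠ j → ∃ u ∈ f i, ∃ v ∈ f j, G.Adj u v := by
    intro f hf i j hij
    rcases lt_or_gt_of_ne hij with h | h
    · exact hf i j h
    · obtain ⟨u, hu, v, hv, huv⟩ := hf j i h
      exact ⟨v, hv, u, hu, huv.symm⟩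
  refine ⟨![{v}, {e}, {a}, {b, c}, {d}], ?_, ?_, ?_⟩
  · intro i
    fin_cases i
    · exact induce_singleton_connected G v
    · exact induce_singleton_connected G e
    · exact induce_singleton_connected G a
    · exact pair
    · exact induce_singleton_connected G d
  · intro i j hij
    rw [Set.disjoint_left]
    intro u
    fin_cases i <;> fin_cases j <;> simp at hij ⊢ <;> grind
  · intro i j hij
    refine sym _ ?_ i j hij
    intro i j hij
    fin_cases i <;> fin_cases j <;> simp at hij ⊢ <;> tauto

/-- If `v` has between one and five neighbours, each with three neighbours among the others, then
`v` and its neighbourhood contain a `K₅`-minor: the neighbourhood contains `K₄`, or it has five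
vertices and is complete up to a matching, so that `K5_of_wheel` applies. -/
theorem K5_of_dense_neighborhood {V : Type*} [Fintype V] [DecidableEq V] (G : SimpleGraph V)
    [DecidableRel G.Adj] (v : V) (D : Finset V) (hD : ∀ w, w ∈ D ↔ G.Adj v w) (h5 : D.card ≤ 5)
    (hne : D.Nonempty) (h3 : ∀ w ∈ D, 3 ≤ (D.filter fun z => G.Adj w z).card) :
    IsMinor (completeGraph (Fin 5)) G := by
  have big : ∀ X : Finset V, X ⊆ D → 4 ≤ X.card →
      (∀ u ∈ X, ∀ w ∈ X, u ≠ w → G.Adj u w) → IsMinor (completeGraph (Fin 5)) G := by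
    intro X hX hXc hcl
    obtain ⟨Y, hY, hYc⟩ := Finset.exists_subset_card_eq hXc
    have hvY : v ∉ Y := fun h => G.irrefl ((hD v).1 (hX (hY h)))
    refine K5_of_clique G (insert v Y) (by rw [Finset.card_insert_of_notMem hvY, hYc]) ?_
    intro u hu w hw huw
    rw [Finset.mem_insert] at hu hw
    rcases hu with rfl | hu <;> rcases hw with rfl | hw
    · exact absurd rfl huw
    · exact (hD w).1 (hX (hY hw))
    · exact ((hD u).1 (hX (hY hu))).symm
    · exact hcl u (hY hu) w (hY hw) huw
  -- a vertex of `D` misses at most `|D| - 4` other vertices of `D`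
  have miss : ∀ w ∈ D, ∀ X ⊆ D, w ∈ X → (∀ z ∈ X, ¬ G.Adj w z) → X.card + 3 ≤ D.card := by
    intro w hw X hX hwX hz
    have hdisj : Disjoint X (D.filter fun z => G.Adj w z) := by
      rw [Finset.disjoint_left]
      intro z hzX hz'
      exact hz z hzX (Finset.mem_filter.1 hz').2
    have := Finset.card_le_card (Finset.union_subset hX (Finset.filter_subset (fun z => G.Adj w z) D))
    rw [Finset.card_union_of_disjoint hdisj] at this
    have := h3 w hw
    omega
  have h4 : 4 ≤ D.card := by
    obtain ⟨w, hw⟩ := hne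
    have := miss w hw {w} (by simpa using hw) (by simp) (by simp)
    simpa using this
  by_cases hall : ∀ u ∈ D, ∀ w ∈ D, u ≠ w → G.Adj u w
  · exact big D subset_rfl h4 hall
  push Not at hall
  obtain ⟨a, ha, b, hb, hab, hnab⟩ := hall
  have hD5 : D.card = 5 := by
    have := miss a ha {a, b} (by intro z; simp; rintro (rfl | rfl) <;> assumption) (by simp)
      (by simp [hnab])
    rw [Finset.card_pair hab] at this
    omega
  have one : ∀ w ∈ D, ∀ z ∈ D, ∀ z' ∈ D, w ≠ z → w ≠ z' → z ≠ z' → ¬ G.Adj w z →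
      G.Adj w z' := by
    intro w hw z hz z' hz' h1 h2 h3 hwz
    by_contra hwz'
    have := miss w hw {w, z, z'} (by intro y; simp; rintro (rfl | rfl | rfl) <;> assumption)
      (by simp) (by simp [hwz, hwz'])
    rw [Finset.card_eq_three.2 ⟨w, z, z', h1, h2, h3, rfl⟩] at this
    omega
  have hrest : ((D.erase a).erase b).card = 3 := by
    rw [Finset.card_erase_of_mem, Finset.card_erase_of_mem ha, hD5]
    exact Finset.mem_erase.2 ⟨hab.symm, hb⟩
  obtain ⟨c, d, e, hcd, hce, hde, hcde⟩ := Finset.card_eq_three.1 hrest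
  have mem : ∀ z ∈ ({c, d, e} : Finset V), z ∈ D ∧ a ≠ z ∧ b ≠ z := by
    intro z hz
    rw [← hcde] at hz
    simp only [Finset.mem_erase] at hz
    exact ⟨hz.2.2, fun h => hz.2.1 h.symm, fun h => hz.1 h.symm⟩
  obtain ⟨hcD, hac, hbc⟩ := mem c (by simp)
  obtain ⟨hdD, had, hbd⟩ := mem d (by simp)
  obtain ⟨heD, hae, hbe⟩ := mem e (by simp)
  have hnba : ¬ G.Adj b a := fun h => hnab h.symm
  have aac := one a ha b hb c hcD hab hac hbc hnab
  have aad := one a ha b hb d hdD hab had hbd hnab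
  have aae := one a ha b hb e heD hab hae hbe hnab
  have abc := one b hb a ha c hcD hab.symm hbc hac hnba
  have abd := one b hb a ha d hdD hab.symm hbd had hnba
  have abe := one b hb a ha e heD hab.symm hbe hae hnba
  rw [hD] at ha hb hcD hdD heD
  by_cases hcd' : G.Adj c d
  · by_cases hce' : G.Adj c e
    · exact K5_of_wheel G v c a b d e hab hde hcD ha hb hdD heD aac.symm abc.symm hcd' hce'
        aad aae abd abe
    · have := one e (by rwa [hD]) c (by rwa [hD]) d (by rwa [hD]) hce.symm hde.symm hcd
        (fun h => hce' h.symm)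
      exact K5_of_wheel G v d a b c e hab hce hdD ha hb hcD heD aad.symm abd.symm hcd'.symm
        this.symm aac aae abc abe
  · have h1 := one c (by rwa [hD]) d (by rwa [hD]) e (by rwa [hD]) hcd hce hde hcd'
    have h2 := one d (by rwa [hD]) c (by rwa [hD]) e (by rwa [hD]) hcd.symm hde hce
      (fun h => hcd' h.symm)
    exact K5_of_wheel G v e a b c d hab hcd heD ha hb hcD hdD aae.symm abe.symm h1.symm h2.symm
      aac aad abc abd

/-- Planar graphs on `n ≥ 3` vertices have at most `3n - 6` edges (Mader's argument).
A graph with exactly `3n - 5` edges has a vertex of degree at most `5`; if an edge at it has at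
most two common neighbours its contraction is a smaller counterexample, and otherwise the
neighbourhood is dense enough to exhibit a `K₅`-minor. -/
theorem planar_edge_bound (n : ℕ) (hn : 3 ≤ n) : ∀ (V : Type) [Fintype V] (G : SimpleGraph V),
    Fintype.card V = n → IsPlanar G → edgeCount G + 6 ≤ 3 * n := by
  classical
  induction n, hn using Nat.le_induction with
  | base =>
    intro V _ G hV _
    have h := G.card_edgeFinset_le_card_choose_two
    rw [hV] at h
    have : edgeCount G = G.edgeFinset.card := by
      rw [edgeCount, ← coe_edgeFinset, Set.ncard_coe_finset]
    rw [show Nat.choose 3 2 = 3 from rfl] at h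
    omega
  | succ n hn ih =>
    intro V _ G hV hG
    by_contra hcon
    obtain ⟨H, hHG, hH⟩ := exists_subgraph_edgeCount G (3 * n - 2) (by omega)
    have hHp := hG.mono hHG
    have hsum := sum_vertexDegree H
    obtain ⟨v, hv⟩ : ∃ v, vertexDegree H v ≤ 5 := by
      by_contra hno
      push Not at hno
      have : ∑ v : V, 6 ≤ ∑ v, vertexDegree H v := Finset.sum_le_sum fun v _ => hno v
      simp only [Finset.sum_const, Finset.card_univ, hV, smul_eq_mul] at this
      omega
    have hcard : ∀ a : V, Fintype.card {u : V // u ≠ a} = n := by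
      intro a
      rw [Fintype.card_subtype_compl, hV]
      simp
    by_cases hiso : ∃ w, H.Adj v w
    · have hcommon : ∀ w, H.Adj v w → 3 ≤ {z | H.Adj v z ∧ H.Adj w z}.ncard := by
        intro w hw
        by_contra hlt
        have h1 := edgeCount_le_contract H v w hw
        have h2 := ih {u : V // u ≠ w} (contract H v w) (hcard w)
          (hHp.of_minor (contract_isMinor H v w hw))
        omega
      refine hHp.1 (K5_of_dense_neighborhood H v (Finset.univ.filter fun w => H.Adj v w)
        (by simp) ?_ ?_ ?_)
      · rw [← Set.ncard_coe_finset]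
        convert hv
        simp only [Finset.coe_filter, Finset.mem_univ, true_and]
        rfl
      · obtain ⟨w, hw⟩ := hiso
        exact ⟨w, by simpa using hw⟩
      · intro w hw
        rw [← Set.ncard_coe_finset]
        convert hcommon w (by simpa using hw)
        simp
    · push Not at hiso
      have h1 := ncard_edges_within_le H {u | u ≠ v}
      have h2 : {e ∈ H.edgeSet | ∀ z ∈ e, z ∈ {u | u ≠ v}} = H.edgeSet := by
        ext e
        induction e with | _ u w
        simp only [Set.mem_ofPred_eq, mem_edgeSet, Sym2.mem_iff, and_iff_left_iff_imp]
        rintro huw z hz rfl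
        have := huw.symm
        grind
      have h3 := ih ↥{u : V | u ≠ v} (H.induce {u | u ≠ v})
        ((Fintype.card_congr (Equiv.refl _)).trans (hcard v)) (hHp.induce _)
      rw [h2] at h1
      unfold edgeCount at *
      omega

theorem planar_edge_bound_weak (V : Type) [Fintype V] (G : SimpleGraph V) (hG : IsPlanar G) :
    edgeCount G ≤ 3 * Fintype.card V := by
  classical
  by_cases h3 : 3 ≤ Fintype.card V
  · have := planar_edge_bound _ h3 V G rfl hG
    omega
  · have h := G.card_edgeFinset_le_card_choose_two
    have : edgeCount G = G.edgeFinset.card := by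
      rw [edgeCount, ← coe_edgeFinset, Set.ncard_coe_finset]
    rw [this]
    refine h.trans ?_
    generalize Fintype.card V = k at *
    interval_cases k <;> decide

/-- Every nonempty vertex set of a planar graph contains a vertex with at most six neighbours
in the set. -/
theorem exists_low_degree (V : Type) [Fintype V] (G : SimpleGraph V) (hG : IsPlanar G)
    (U : Set V) (hU : U.Nonempty) : ∃ v ∈ U, {w ∈ U | G.Adj v w}.ncard ≤ 6 := by
  classical
  by_contra hno
  push Not at hno
  have hsum := sum_vertexDegree (G.induce U)
  have hb := planar_edge_bound_weak U (G.induce U) (hG.induce U)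
  have : ∑ v : U, 7 ≤ ∑ v, vertexDegree (G.induce U) v := by
    refine Finset.sum_le_sum fun v _ => (Nat.succ_le_of_lt (hno v v.2)).trans ?_
    have : {w ∈ U | G.Adj v w} ⊆ Subtype.val '' ((G.induce U).neighborSet v) := by
      rintro w ⟨hw, hvw⟩
      exact ⟨⟨w, hw⟩, hvw, rfl⟩
    exact (Set.ncard_le_ncard this (Set.toFinite _)).trans (Set.ncard_image_le (Set.toFinite _))
  simp only [Finset.sum_const, Finset.card_univ, smul_eq_mul] at this
  have hpos : 0 < Fintype.card U := Fintype.card_pos_iff.2 hU.to_subtype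
  omega

theorem ncard_le_mul_of_fibers {α β : Type*} [Finite α] [Finite β] (s : Set α) (t : Set β)
    (f : α → β) (k : ℕ) (hf : ∀ a ∈ s, f a ∈ t) (hk : ∀ b ∈ t, {a ∈ s | f a = b}.ncard ≤ k) :
    s.ncard ≤ k * t.ncard := by
  classical
  rw [Set.ncard_eq_toFinset_card s, Set.ncard_eq_toFinset_card t]
  refine Finset.card_le_mul_card_image_of_maps_to (f := f) (by simpa using hf) k ?_
  intro b hb
  rw [← Set.ncard_coe_finset]
  convert hk b (by simpa using hb)
  simp

/-! ### Edges outside triangles -/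

/-- The ordered pairs `(u, w)` of adjacent vertices of degree at most `C` such that the edge
`uw` lies in no triangle. -/
def sparseDarts {V : Type*} (G : SimpleGraph V) (C : ℕ) : Set (V × V) :=
  {p | G.Adj p.1 p.2 ∧ vertexDegree G p.1 ≤ C ∧ vertexDegree G p.2 ≤ C ∧
    ∀ z, G.Adj p.1 z → ¬ G.Adj p.2 z}

theorem sparseDarts_touching_le {V : Type*} [Finite V] (G : SimpleGraph V) (C : ℕ) (Z : Set V) :
    {p ∈ sparseDarts G C | p.1 ∈ Z ∨ p.2 ∈ Z}.ncard ≤ 2 * C * Z.ncard := by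
  have h1 : {p ∈ sparseDarts G C | p.1 ∈ Z}.ncard ≤ C * Z.ncard := by
    refine ncard_le_mul_of_fibers _ _ Prod.fst C (fun p hp => hp.2) fun z _ => ?_
    by_cases hz : vertexDegree G z ≤ C
    · refine le_trans ?_ hz
      refine Set.ncard_le_ncard_of_injOn Prod.snd ?_ ?_ (Set.toFinite _)
      · rintro ⟨u, w⟩ ⟨⟨hp, _⟩, rfl⟩
        exact hp.1
      · rintro ⟨u, w⟩ ⟨_, hu⟩ ⟨u', w'⟩ ⟨_, hu'⟩ h
        exact Prod.ext (hu.trans hu'.symm) h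
    · have : {a | a ∈ {p | p ∈ sparseDarts G C ∧ p.1 ∈ Z} ∧ a.1 = z} = ∅ := by
        ext p
        simp only [Set.mem_ofPred_eq, Set.mem_empty_iff_false, iff_false]
        rintro ⟨⟨hp, _⟩, rfl⟩
        exact hz hp.2.1
      rw [this]
      simp
  have h2 : {p ∈ sparseDarts G C | p.2 ∈ Z}.ncard ≤ C * Z.ncard := by
    refine le_trans ?_ h1
    refine Set.ncard_le_ncard_of_injOn Prod.swap ?_ Prod.swap_injective.injOn (Set.toFinite _)
    rintro ⟨u, w⟩ ⟨⟨h1, h2, h3, h4⟩, hw⟩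
    exact ⟨⟨h1.symm, h3, h2, fun z hz hz' => h4 z hz' hz⟩, hw⟩
  have h3 : {p ∈ sparseDarts G C | p.1 ∈ Z ∨ p.2 ∈ Z} =
      {p ∈ sparseDarts G C | p.1 ∈ Z} ∪ {p ∈ sparseDarts G C | p.2 ∈ Z} := by
    ext p
    simp only [Set.mem_ofPred_eq, Set.mem_union]
    tauto
  rw [h3]
  refine (Set.ncard_union_le _ _).trans ?_
  calc _ ≤ C * Z.ncard + C * Z.ncard := Nat.add_le_add h1 h2
    _ = _ := by ring

/-- Contracting a sparse edge `xa` only affects sparse darts that touch the neighbourhood of `x` or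
of `a`. -/
theorem sparseDarts_contract {V : Type*} [Finite V] (G : SimpleGraph V) (C : ℕ) (x a : V)
    (h : (x, a) ∈ sparseDarts G C) :
    (sparseDarts G C).ncard ≤ (sparseDarts (contract G x a) C).ncard + 4 * C ^ 2 := by
  obtain ⟨hadj, hdx, hda, htri⟩ := h
  set Z : Set V := G.neighborSet x ∪ G.neighborSet a with hZ
  have hZc : Z.ncard ≤ 2 * C := by
    refine (Set.ncard_union_le _ _).trans ?_
    unfold vertexDegree at hdx hda
    simp only at hdx hda
    omega
  have hlost := sparseDarts_touching_le G C Z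
  have hsurv : {p ∈ sparseDarts G C | ¬ (p.1 ∈ Z ∨ p.2 ∈ Z)} ⊆
      Prod.map Subtype.val Subtype.val '' sparseDarts (contract G x a) C := by
    rintro ⟨u, w⟩ ⟨⟨h1, h2, h3, h4⟩, hout⟩
    simp only [hZ, Set.mem_union, mem_neighborSet, not_or] at hout h1 h2 h3 h4
    obtain ⟨⟨hu1, hu2⟩, hw1, hw2⟩ := hout
    have hua : u ≠ a := fun h => hu1 (h ▸ hadj)
    have hwa : w ≠ a := fun h => hw1 (h ▸ hadj)
    have hux : u ≠ x := fun h => hu2 (h ▸ hadj.symm)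
    have hwx : w ≠ x := fun h => hw2 (h ▸ hadj.symm)
    have nbr : ∀ v (hv : v ≠ a), ¬ G.Adj a v → v ≠ x → ∀ q,
        (contract G x a).Adj ⟨v, hv⟩ q → G.Adj v q := by
      intro v hv hav hvx q hq
      rcases hq.2 with hq | hq | hq
      · exact hq
      · exact absurd hq.1 hvx
      · exact absurd hq.2 hav
    have deg : ∀ v (hv : v ≠ a), ¬ G.Adj a v → v ≠ x →
        vertexDegree (contract G x a) ⟨v, hv⟩ ≤ vertexDegree G v := by
      intro v hv hav hvx
      exact Set.ncard_le_ncard_of_injOn Subtype.val (fun q hq => nbr v hv hav hvx q hq)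
        Subtype.val_injective.injOn (Set.toFinite _)
    refine ⟨(⟨u, hua⟩, ⟨w, hwa⟩), ⟨⟨?_, Or.inl h1⟩, (deg u hua hu2 hux).trans h2,
      (deg w hwa hw2 hwx).trans h3, ?_⟩, rfl⟩
    · simpa using h1.ne
    · intro z hz hz'
      exact h4 z (nbr u hua hu2 hux z hz) (nbr w hwa hw2 hwx z hz')
  have hs := (Set.ncard_le_ncard hsurv (Set.toFinite _)).trans (Set.ncard_image_le (Set.toFinite _))
  have hsplit : sparseDarts G C ⊆ {p ∈ sparseDarts G C | ¬ (p.1 ∈ Z ∨ p.2 ∈ Z)} ∪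
      {p ∈ sparseDarts G C | p.1 ∈ Z ∨ p.2 ∈ Z} := by
    intro p hp
    by_cases hpZ : p.1 ∈ Z ∨ p.2 ∈ Z
    · exact Or.inr ⟨hp, hpZ⟩
    · exact Or.inl ⟨hp, hpZ⟩
  have := (Set.ncard_le_ncard hsplit (Set.toFinite _)).trans (Set.ncard_union_le _ _)
  have : 2 * C * Z.ncard ≤ 4 * C ^ 2 := by
    calc 2 * C * Z.ncard ≤ 2 * C * (2 * C) := Nat.mul_le_mul_left _ hZc
      _ = _ := by ring
  omega

/-- A planar graph with few missing edges has few sparse darts: contracting an edge outside all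
triangles reduces `3n - m` by two, and affects only boundedly many other sparse darts. -/
theorem sparseDarts_bound (C n : ℕ) : ∀ (V : Type) [Fintype V] (G : SimpleGraph V),
    Fintype.card V = n → IsPlanar G →
    (sparseDarts G C).ncard + 2 * C ^ 2 * edgeCount G ≤ 2 * C ^ 2 * (3 * n) := by
  classical
  induction n with
  | zero =>
    intro V _ G hV hG
    have := planar_edge_bound_weak V G hG
    have hE : IsEmpty V := Fintype.card_eq_zero_iff.1 hV
    have h0 : sparseDarts G C = ∅ := Set.eq_empty_of_isEmpty _
    rw [hV] at this
    rw [h0, Set.ncard_empty]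
    simp only [Nat.mul_zero, Nat.le_zero] at this
    simp [this]
  | succ n ih =>
    intro V _ G hV hG
    by_cases hne : (sparseDarts G C).Nonempty
    · obtain ⟨⟨x, a⟩, hxa⟩ := hne
      have h1 := sparseDarts_contract G C x a hxa
      have hadj : G.Adj x a := hxa.1
      have h2 := ih {v : V // v ≠ a} (contract G x a)
        (by rw [Fintype.card_subtype_compl, hV]; simp)
        (hG.of_minor (contract_isMinor G x a hadj))
      have h3 := edgeCount_le_contract G x a hadj
      have h4 : {w | G.Adj x w ∧ G.Adj a w} = ∅ := by
        ext w
        simp only [Set.mem_ofPred_eq, Set.mem_empty_iff_false, iff_false, not_and]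
        exact hxa.2.2.2 w
      rw [h4, Set.ncard_empty] at h3
      have h5 : 2 * C ^ 2 * edgeCount G ≤ 2 * C ^ 2 * (edgeCount (contract G x a) + 1) :=
        Nat.mul_le_mul_left _ h3
      nlinarith
    · rw [Set.not_nonempty_iff_eq_empty.1 hne, Set.ncard_empty, zero_add]
      refine Nat.mul_le_mul_left _ ?_
      have := planar_edge_bound_weak V G hG
      omega

/-! ### Vertices with three neighbours in a small set -/

/-- Induction on `U`: remove a vertex with at most six neighbours in `U`, which lies in at most
`15 = 6.choose 2` triangles inside `U`. -/
theorem triangle_count {V : Type} [Fintype V] [DecidableEq V] (H : SimpleGraph V)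
    [DecidableRel H.Adj] (hH : IsPlanar H) (U : Finset V) :
    ((U.powersetCard 3).filter fun T => ∀ u ∈ T, ∀ w ∈ T, u ≠ w → H.Adj u w).card
      ≤ 15 * U.card := by
  induction U using Finset.strongInduction with
  | H U ih =>
    rcases U.eq_empty_or_nonempty with rfl | hU
    · simp
    obtain ⟨v, hv, hdeg⟩ := exists_low_degree V H hH (U : Set V) (by simpa using hU)
    rw [Finset.mem_coe] at hv
    have hdeg' : (U.filter fun w => H.Adj v w).card ≤ 6 := by
      rw [← Set.ncard_coe_finset]
      convert hdeg
      simp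
    have h1 := ih (U.erase v) (Finset.erase_ssubset hv)
    rw [Finset.card_erase_of_mem hv] at h1
    have hpos : 0 < U.card := Finset.card_pos.2 hU
    have hsub : ((U.powersetCard 3).filter fun T => ∀ u ∈ T, ∀ w ∈ T, u ≠ w → H.Adj u w) ⊆
        (((U.erase v).powersetCard 3).filter fun T => ∀ u ∈ T, ∀ w ∈ T, u ≠ w → H.Adj u w) ∪
        ((U.filter fun w => H.Adj v w).powersetCard 2).image (insert v) := by
      intro T hT
      rw [Finset.mem_filter, Finset.mem_powersetCard] at hT
      obtain ⟨⟨hTU, hTc⟩, hcl⟩ := hT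
      rw [Finset.mem_union]
      by_cases hvT : v ∈ T
      · right
        rw [Finset.mem_image]
        refine ⟨T.erase v, ?_, Finset.insert_erase hvT⟩
        rw [Finset.mem_powersetCard, Finset.card_erase_of_mem hvT, hTc]
        refine ⟨?_, rfl⟩
        intro w hw
        rw [Finset.mem_erase] at hw
        exact Finset.mem_filter.2 ⟨hTU hw.2, hcl v hvT w hw.2 hw.1.symm⟩
      · left
        rw [Finset.mem_filter, Finset.mem_powersetCard]
        exact ⟨⟨Finset.subset_erase.2 ⟨hTU, hvT⟩, hTc⟩, hcl⟩
    have h2 : (((U.filter fun w => H.Adj v w).powersetCard 2).image (insert v)).card ≤ 15 := by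
      refine Finset.card_image_le.trans ?_
      rw [Finset.card_powersetCard]
      exact (Nat.choose_le_choose 2 hdeg').trans (by decide)
    have := (Finset.card_le_card hsub).trans (Finset.card_union_le _ _)
    omega

/-- A greedy assignment of distinct pairs of `S`-neighbours to vertices of `X`: every vertex that
is left out has all pairs of its `S`-neighbours already assigned. -/
theorem exists_pair_assignment {V : Type} [DecidableEq V] (G : SimpleGraph V) (S X : Finset V) :
    ∃ A ⊆ X, ∃ φ : V → V × V,
      (∀ x ∈ A, (φ x).1 ∈ S ∧ (φ x).2 ∈ S ∧ (φ x).1 ≠ (φ x).2 ∧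
        G.Adj x (φ x).1 ∧ G.Adj x (φ x).2) ∧
      Set.InjOn (fun x => s((φ x).1, (φ x).2)) (A : Set V) ∧
      ∀ x ∈ X, x ∉ A → ∀ p ∈ S, ∀ q ∈ S, p ≠ q → G.Adj x p → G.Adj x q →
        ∃ y ∈ A, s((φ y).1, (φ y).2) = s(p, q) := by
  induction X using Finset.induction_on with
  | empty => exact ⟨∅, subset_rfl, fun x => (x, x), by simp, by simp, by simp⟩
  | insert x X hx ih =>
    obtain ⟨A, hA, φ, h1, h2, h3⟩ := ih
    have hxA : x ∉ A := fun h => hx (hA h)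
    by_cases hnew : ∃ p ∈ S, ∃ q ∈ S, p ≠ q ∧ G.Adj x p ∧ G.Adj x q ∧
        ∀ y ∈ A, s((φ y).1, (φ y).2) ≠ s(p, q)
    · obtain ⟨p, hp, q, hq, hpq, hxp, hxq, hfree⟩ := hnew
      have hold : ∀ y ∈ A, Function.update φ x (p, q) y = φ y := by
        intro y hy
        exact Function.update_of_ne (by rintro rfl; exact hxA hy) _ _
      refine ⟨insert x A, Finset.insert_subset_insert x hA, Function.update φ x (p, q), ?_, ?_, ?_⟩
      · intro y hy
        rw [Finset.mem_insert] at hy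
        rcases hy with rfl | hy
        · rw [Function.update_self]
          exact ⟨hp, hq, hpq, hxp, hxq⟩
        · rw [hold y hy]
          exact h1 y hy
      · rw [Finset.coe_insert, Set.injOn_insert (by simpa using hxA)]
        refine ⟨?_, ?_⟩
        · intro y hy z hz hyz
          simp only [hold y hy, hold z hz] at hyz
          exact h2 hy hz hyz
        · rintro ⟨y, hy, hyx⟩
          simp only [hold y hy, Function.update_self] at hyx
          exact hfree y hy hyx
      · intro y hy hyA p' hp' q' hq' hpq' hyp hyq
        rw [Finset.mem_insert] at hy hyA
        push Not at hyA
        obtain ⟨z, hz, hzz⟩ := h3 y (hy.resolve_left hyA.1) hyA.2 p' hp' q' hq' hpq' hyp hyq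
        exact ⟨z, Finset.mem_insert_of_mem hz, by rw [hold z hz]; exact hzz⟩
    · push Not at hnew
      refine ⟨A, hA.trans (Finset.subset_insert _ _), φ, h1, h2, ?_⟩
      intro y hy hyA p hp q hq hpq hyp hyq
      rw [Finset.mem_insert] at hy
      rcases hy with rfl | hy
      · exact hnew p hp q hq hpq hyp hyq
      · exact h3 y hy hyA p hp q hq hpq hyp hyq

theorem K33_of_common {V : Type*} (G : SimpleGraph V) (X T : Finset V) (hX : X.card = 3)
    (hT : T.card = 3) (hXT : ∀ x ∈ X, ∀ t ∈ T, G.Adj x t) :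
    IsMinor (completeBipartiteGraph (Fin 3) (Fin 3)) G := by
  let e := (X.equivFinOfCardEq hX).symm
  let e' := (T.equivFinOfCardEq hT).symm
  refine isMinor_of_injective (Sum.elim (fun i => (e i : V)) fun j => (e' j : V)) ?_ ?_
  · refine Function.Injective.sumElim (Subtype.val_injective.comp e.injective)
      (Subtype.val_injective.comp e'.injective) ?_
    intro i j
    exact (hXT _ (e i).2 _ (e' j).2).ne
  · rintro (i | i) (j | j) hij <;> simp at hij ⊢
    · exact hXT _ (e i).2 _ (e' j).2
    · exact (hXT _ (e j).2 _ (e' i).2).symm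

/-- In a planar graph only `O(|S|)` vertices outside `S` have three neighbours in `S`. Contracting
each assigned vertex into its first partner yields a planar graph on `S`, which bounds the number
of assigned vertices; each remaining vertex sees a triangle of that graph, and no triangle is
seen three times since there is no `K₃,₃`. -/
theorem three_neighbors_bound {V : Type} [Fintype V] [DecidableEq V] (G : SimpleGraph V)
    [DecidableRel G.Adj] (hG : IsPlanar G) (S X : Finset V) (hXS : Disjoint X S)
    (hX : ∀ x ∈ X, 3 ≤ (S.filter fun w => G.Adj x w).card) : X.card ≤ 33 * S.card := by
  classical
  obtain ⟨A, hA, φ, h1, h2, h3⟩ := exists_pair_assignment G S X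
  let H : SimpleGraph S :=
    { Adj := fun p q => p ≠ q ∧ ∃ x ∈ A, s((φ x).1, (φ x).2) = s((p : V), (q : V))
      symm := ⟨fun p q h => ⟨h.1.symm, by
        obtain ⟨x, hx, hxx⟩ := h.2
        exact ⟨x, hx, hxx.trans Sym2.eq_swap⟩⟩⟩
      loopless := ⟨fun p h => h.1 rfl⟩ }
  have hAS : ∀ x ∈ A, x ∉ S := fun x hx => Finset.disjoint_left.1 hXS (hA hx)
  have hH : IsPlanar H := by
    refine hG.of_minor ⟨fun p => {u | u = p ∨ (u ∈ A ∧ (φ u).1 = p)}, ?_, ?_, ?_⟩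
    · rintro ⟨p, hp⟩
      rw [induce_connected_iff]
      refine ⟨⟨p, Or.inl rfl⟩, ?_⟩
      rintro t ⟨u, hu, hut⟩ hcl
      have hpt : p ∈ t := by
        rcases hu with rfl | ⟨hu, hup⟩
        · exact hut
        · refine hcl u (Or.inr ⟨hu, hup⟩) hut p (Or.inl rfl) ?_
          simp only at hup
          rw [← hup]
          exact (h1 u hu).2.2.2.1
      rintro w (rfl | ⟨hw, hwp⟩)
      · exact hpt
      · refine hcl p (Or.inl rfl) hpt w (Or.inr ⟨hw, hwp⟩) ?_
        simp only at hwp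
        rw [← hwp]
        exact (h1 w hw).2.2.2.1.symm
    · rintro ⟨p, hp⟩ ⟨q, hq⟩ hpq
      rw [Set.disjoint_left]
      intro u hu hu'
      simp only [Set.mem_ofPred_eq] at hu hu'
      have := hAS u
      grind
    · rintro ⟨p, hp⟩ ⟨q, hq⟩ ⟨_, x, hx, hxx⟩
      rw [Sym2.eq_iff] at hxx
      have := h1 x hx
      simp only at hxx
      rcases hxx with ⟨hp', hq'⟩ | ⟨hp', hq'⟩
      · exact ⟨x, Or.inr ⟨hx, hp'⟩, q, Or.inl rfl, by
          rw [← hq']; exact this.2.2.2.2⟩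
      · exact ⟨p, Or.inl rfl, x, Or.inr ⟨hx, hp'⟩, by
          rw [← hq']; exact this.2.2.2.2.symm⟩
  have hAc : A.card ≤ 3 * S.card := by
    have hb := planar_edge_bound_weak S H hH
    rw [Fintype.card_coe] at hb
    refine le_trans ?_ hb
    have : (A : Set V).ncard ≤ (Sym2.map Subtype.val '' H.edgeSet).ncard := by
      refine Set.ncard_le_ncard_of_injOn _ ?_ h2 (Set.toFinite _)
      intro x hx
      obtain ⟨hp, hq, hpq, -, -⟩ := h1 x hx
      exact ⟨s(⟨_, hp⟩, ⟨_, hq⟩), ⟨by simpa using hpq, x, hx, rfl⟩, rfl⟩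
    rw [Set.ncard_coe_finset] at this
    exact this.trans (Set.ncard_image_le (Set.toFinite _))
  have htri := triangle_count H hH Finset.univ
  rw [Finset.card_univ, Fintype.card_coe] at htri
  have hR : (X \ A).card ≤ 2 * (15 * S.card) := by
    have hex : ∀ x ∈ X \ A, ∃ T ⊆ S.filter (fun w => G.Adj x w), T.card = 3 := fun x hx =>
      Finset.exists_subset_card_eq (hX x (Finset.mem_sdiff.1 hx).1)
    choose! τ hτ hτc using hex
    have hτS : ∀ x ∈ X \ A, ∀ z ∈ τ x, z ∈ S ∧ G.Adj x z := fun x hx z hz =>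
      Finset.mem_filter.1 (hτ x hx hz)
    refine le_trans (Finset.card_le_mul_card_image_of_maps_to
      (f := fun x => (τ x).subtype (· ∈ S)) ?_ 2 ?_) (Nat.mul_le_mul_left 2 htri)
    · intro x hx
      rw [Finset.mem_filter, Finset.mem_powersetCard]
      refine ⟨⟨Finset.subset_univ _, ?_⟩, ?_⟩
      · rw [Finset.card_subtype, Finset.filter_true_of_mem fun z hz => (hτS x hx z hz).1]
        exact hτc x hx
      · intro u hu w hw huw
        rw [Finset.mem_subtype] at hu hw
        refine ⟨huw, ?_⟩
        obtain ⟨hxX, hxA⟩ := Finset.mem_sdiff.1 hx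
        exact h3 x hxX hxA u u.2 w w.2 (fun h => huw (Subtype.ext h))
          (hτS x hx u hu).2 (hτS x hx w hw).2
    · intro T hT
      rw [Finset.mem_filter, Finset.mem_powersetCard] at hT
      by_contra hlt
      push Not at hlt
      obtain ⟨Y, hY, hYc⟩ := Finset.exists_subset_card_eq hlt
      refine hG.2 (K33_of_common G Y (T.map (Function.Embedding.subtype _)) hYc
        (by rw [Finset.card_map]; exact hT.1.2) ?_)
      intro x hx t ht
      obtain ⟨hxX, hxT⟩ := Finset.mem_filter.1 (hY hx)
      rw [Finset.mem_map] at ht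
      obtain ⟨t', ht', rfl⟩ := ht
      rw [← hxT, Finset.mem_subtype] at ht'
      exact (hτS x hxX _ ht').2
  have := Finset.card_sdiff_add_card_eq_card hA
  omega

/-! ### Low-degree vertices in triangles -/

theorem ncard_darts {V : Type*} [Fintype V] (G : SimpleGraph V) :
    {p : V × V | G.Adj p.1 p.2}.ncard = 2 * edgeCount G := by
  classical
  rw [← sum_vertexDegree, Set.ncard_eq_toFinset_card', Finset.card_eq_sum_card_fiberwise
    (f := Prod.fst) (t := Finset.univ) (by intro _ _; simp)]
  refine Finset.sum_congr rfl fun v _ => ?_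
  rw [vertexDegree, Set.ncard_eq_toFinset_card']
  refine Finset.card_bij (fun p _ => p.2) ?_ ?_ ?_
  · rintro ⟨a, b⟩ h
    simp only [Finset.mem_filter, Set.mem_toFinset, Set.mem_ofPred_eq] at h
    obtain ⟨h, rfl⟩ := h
    simpa using h
  · rintro ⟨a, b⟩ h ⟨a', b'⟩ h' hb
    simp only [Finset.mem_filter] at h h'
    exact Prod.ext (h.2.trans h'.2.symm) hb
  · intro b hb
    refine ⟨(v, b), ?_, rfl⟩
    simpa using hb

/-- Vertices of degree at most `C` lying in a triangle with another vertex of degree at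
most `C`. -/
def goodVertices {V : Type*} (G : SimpleGraph V) (C : ℕ) : Set V :=
  {x | vertexDegree G x ≤ C ∧
    ∃ a y, G.Adj x a ∧ vertexDegree G a ≤ C ∧ G.Adj a y ∧ G.Adj x y}

/-- A planar graph with `3n - o(n)` edges has linearly many good vertices. There are few vertices
`S` of degree above `C`, so almost all other vertices send at most two edges to `S`; hence about
`n` edges join vertices of degree at most `C`, and almost all of these lie in triangles.
The constant `1224 = 6 * 204` makes the at most `204 * |S|` darts inside the exceptional set `U`
number at most `n`. -/
theorem goodVertices_bound (C : ℕ) (hC : 1224 ≤ C) (V : Type) [Fintype V] (G : SimpleGraph V)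
    (hG : IsPlanar G) :
    2 * edgeCount G + 2 * C ^ 2 * edgeCount G ≤
      C * (goodVertices G C).ncard + 5 * Fintype.card V + 2 * C ^ 2 * (3 * Fintype.card V) := by
  classical
  set n := Fintype.card V with hn
  have hm := planar_edge_bound_weak V G hG
  have hsum := sum_vertexDegree G
  let S : Finset V := Finset.univ.filter fun v => C < vertexDegree G v
  let X : Finset V := Finset.univ.filter fun v =>
    v ∉ S ∧ 3 ≤ (S.filter fun w => G.Adj v w).card
  have hS : C * S.card ≤ 6 * n := by
    calc C * S.card = ∑ v ∈ S, C := by rw [Finset.sum_const, smul_eq_mul, mul_comm]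
      _ ≤ ∑ v ∈ S, vertexDegree G v :=
        Finset.sum_le_sum fun v hv => (Finset.mem_filter.1 hv).2.le
      _ ≤ ∑ v, vertexDegree G v :=
        Finset.sum_le_sum_of_subset (Finset.subset_univ S)
      _ ≤ 6 * n := by omega
  have hX : X.card ≤ 33 * S.card := by
    refine three_neighbors_bound G hG S X ?_ fun x hx => (Finset.mem_filter.1 hx).2.2
    rw [Finset.disjoint_left]
    exact fun x hx => (Finset.mem_filter.1 hx).2.1
  let U : Set V := ((S ∪ X : Finset V) : Set V)
  have hU : Fintype.card U ≤ 34 * S.card := by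
    have : Fintype.card U = (S ∪ X).card := by simp [U]
    rw [this]
    refine (Finset.card_union_le _ _).trans ?_
    omega
  let D1 : Set (V × V) := {p | G.Adj p.1 p.2 ∧ p.1 ∈ U ∧ p.2 ∈ U}
  let D2 : Set (V × V) := {p | G.Adj p.1 p.2 ∧ p.2 ∈ S ∧ p.1 ∉ U}
  let D3 : Set (V × V) := {p | G.Adj p.1 p.2 ∧ p.1 ∈ S ∧ p.2 ∉ U}
  let D4 : Set (V × V) := {p | G.Adj p.1 p.2 ∧ p.1 ∈ goodVertices G C}
  have h1 : D1.ncard ≤ 204 * S.card := by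
    have hsub : D1 ⊆ Prod.map Subtype.val Subtype.val ''
        {p : U × U | (G.induce U).Adj p.1 p.2} := by
      rintro ⟨u, w⟩ ⟨huw, hu, hw⟩
      exact ⟨(⟨u, hu⟩, ⟨w, hw⟩), huw, rfl⟩
    have ha := (Set.ncard_le_ncard hsub (Set.toFinite _)).trans
      (Set.ncard_image_le (Set.toFinite _))
    rw [ncard_darts] at ha
    have hb := planar_edge_bound_weak U (G.induce U) (hG.induce U)
    omega
  have h2 : D2.ncard ≤ 2 * n := by
    have : (Set.univ : Set V).ncard = n := by rw [Set.ncard_univ, Nat.card_eq_fintype_card]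
    rw [← this]
    refine ncard_le_mul_of_fibers _ _ Prod.fst 2 (fun _ _ => trivial) fun v _ => ?_
    by_cases hv : v ∈ U
    · have : {a | a ∈ D2 ∧ a.1 = v} = ∅ := by
        ext p
        simp only [Set.mem_ofPred_eq, Set.mem_empty_iff_false, iff_false]
        rintro ⟨⟨_, _, hp⟩, rfl⟩
        exact hp hv
      rw [this]
      simp
    · have hv2 : (S.filter fun w => G.Adj v w).card ≤ 2 := by
        simp only [U, Finset.coe_union, Set.mem_union, Finset.mem_coe, not_or] at hv
        by_contra hlt
        exact hv.2 (Finset.mem_filter.2 ⟨Finset.mem_univ _, hv.1, by omega⟩)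
      refine le_trans ?_ hv2
      rw [← Set.ncard_coe_finset]
      refine Set.ncard_le_ncard_of_injOn Prod.snd ?_ ?_ (Set.toFinite _)
      · rintro ⟨u, w⟩ ⟨⟨hp, hw, _⟩, rfl⟩
        exact Finset.mem_coe.2 (Finset.mem_filter.2 ⟨hw, hp⟩)
      · rintro ⟨u, w⟩ ⟨_, hu⟩ ⟨u', w'⟩ ⟨_, hu'⟩ h
        exact Prod.ext (hu.trans hu'.symm) h
  have h3 : D3.ncard ≤ 2 * n := by
    refine le_trans ?_ h2
    refine Set.ncard_le_ncard_of_injOn Prod.swap ?_ Prod.swap_injective.injOn (Set.toFinite _)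
    rintro ⟨u, w⟩ ⟨huw, hu, hw⟩
    exact ⟨huw.symm, hu, hw⟩
  have h4 : D4.ncard ≤ C * (goodVertices G C).ncard := by
    refine ncard_le_mul_of_fibers _ _ Prod.fst C (fun p hp => hp.2) fun x hx => ?_
    refine le_trans ?_ hx.1
    refine Set.ncard_le_ncard_of_injOn Prod.snd ?_ ?_ (Set.toFinite _)
    · rintro ⟨u, w⟩ ⟨⟨hp, _⟩, rfl⟩
      exact hp
    · rintro ⟨u, w⟩ ⟨_, hu⟩ ⟨u', w'⟩ ⟨_, hu'⟩ h
      exact Prod.ext (hu.trans hu'.symm) h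
  have h5 := sparseDarts_bound C n V G hn.symm hG
  have hcover : {p : V × V | G.Adj p.1 p.2} ⊆ D1 ∪ (D2 ∪ (D3 ∪ (D4 ∪ sparseDarts G C))) := by
    rintro ⟨u, w⟩ huw
    have huw : G.Adj u w := huw
    have hSU : ∀ z ∈ S, z ∈ U := fun z hz => by simp [U, hz]
    have low : ∀ z, z ∉ S → vertexDegree G z ≤ C := fun z hz => by
      simpa [S] using hz
    by_cases hu : u ∈ S
    · by_cases hw : w ∈ U
      · exact Or.inl ⟨huw, hSU u hu, hw⟩
      · exact Or.inr (Or.inr (Or.inl ⟨huw, hu, hw⟩))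
    by_cases hw : w ∈ S
    · by_cases hu' : u ∈ U
      · exact Or.inl ⟨huw, hu', hSU w hw⟩
      · exact Or.inr (Or.inl ⟨huw, hw, hu'⟩)
    by_cases htri : ∃ y, G.Adj u y ∧ G.Adj w y
    · obtain ⟨y, huy, hwy⟩ := htri
      exact Or.inr (Or.inr (Or.inr (Or.inl
        ⟨huw, low u hu, w, y, huw, low w hw, hwy, huy⟩)))
    · push Not at htri
      exact Or.inr (Or.inr (Or.inr (Or.inr ⟨huw, low u hu, low w hw, htri⟩)))
  have hc := Set.ncard_le_ncard hcover (Set.toFinite _)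
  rw [ncard_darts] at hc
  have u1 := Set.ncard_union_le D1 (D2 ∪ (D3 ∪ (D4 ∪ sparseDarts G C)))
  have u2 := Set.ncard_union_le D2 (D3 ∪ (D4 ∪ sparseDarts G C))
  have u3 := Set.ncard_union_le D3 (D4 ∪ sparseDarts G C)
  have u4 := Set.ncard_union_le D4 (sparseDarts G C)
  have hS' : 1224 * S.card ≤ 6 * n := (Nat.mul_le_mul_right _ hC).trans hS
  omega

/-! ### Joining two components by an edge -/

/-- If the vertex set splits into `A` and its complement with no edges of `G` in between, then a
minor model in `G` plus the edge `xv`, all of whose branch sets meet the side `A` of `x`, can be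
retracted to a minor model in `G`. -/
theorem minor_retract {α V : Type*} {H : SimpleGraph α} {G G' : SimpleGraph V} {A : Set V}
    {x v : V} (hx : x ∈ A) (hv : v ∉ A) (hA : ∀ u ∈ A, ∀ w, G.Adj u w → w ∈ A)
    (hG' : ∀ u w, G'.Adj u w → G.Adj u w ∨ (u = x ∧ w = v) ∨ (u = v ∧ w = x))
    (f : α → Set V) (h1 : ∀ a, (G'.induce (f a)).Connected)
    (h2 : ∀ a b, a ≠ b → Disjoint (f a) (f b))
    (h3 : ∀ a b, H.Adj a b → ∃ u ∈ f a, ∃ w ∈ f b, G'.Adj u w)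
    (hmeet : ∀ a, ∃ u ∈ f a, u ∈ A) : IsMinor H G := by
  simp only [induce_connected_iff] at h1
  have hA' : ∀ u ∉ A, ∀ w, G.Adj u w → w ∉ A := fun u hu w huw hw => hu (hA w hw u huw.symm)
  -- a branch set that leaves `A` does so through `x`
  have cross : ∀ a, (∃ u ∈ f a, u ∉ A) → x ∈ f a := by
    rintro a ⟨u, hu, huA⟩
    by_contra hxa
    obtain ⟨w, hw, hwA⟩ := hmeet a
    refine huA ((h1 a).2 A ⟨w, hw, hwA⟩ ?_ hu)
    intro p hp hpA q hq hpq
    rcases hG' p q hpq with h | ⟨rfl, rfl⟩ | ⟨rfl, rfl⟩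
    · exact hA p hpA q h
    · exact absurd hp hxa
    · exact absurd hpA hv
  have same : ∀ a b, x ∈ f a → x ∈ f b → a = b := by
    intro a b ha hb
    by_contra hab
    exact Set.disjoint_left.1 (h2 a b hab) ha hb
  refine ⟨fun a => f a ∩ A, ?_, ?_, ?_⟩
  · intro a
    rw [induce_connected_iff]
    refine ⟨hmeet a, ?_⟩
    rintro t ⟨u, ⟨hu, huA⟩, hut⟩ hcl
    by_cases hxt : x ∈ t
    · have := (h1 a).2 (t ∩ A ∪ Aᶜ) ⟨u, hu, Or.inl ⟨hut, huA⟩⟩ (by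
        intro p hp hpt q hq hpq
        by_cases hqA : q ∈ A
        · left
          refine ⟨?_, hqA⟩
          rcases hG' p q hpq with h | ⟨rfl, rfl⟩ | ⟨rfl, rfl⟩
          · have hpA : p ∈ A := hA q hqA p h.symm
            have hpt' : p ∈ t := by
              rcases hpt with h' | h'
              · exact h'.1
              · exact absurd hpA h'
            exact hcl p ⟨hp, hpA⟩ hpt' q ⟨hq, hqA⟩ h
          · exact absurd hqA hv
          · exact hxt
        · exact Or.inr hqA)
      rintro w ⟨hw, hwA⟩
      rcases this hw with h | h
      · exact h.1
      · exact absurd hwA h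
    · have := (h1 a).2 (t ∩ A) ⟨u, hu, hut, huA⟩ (by
        rintro p hp ⟨hpt, hpA⟩ q hq hpq
        rcases hG' p q hpq with h | ⟨rfl, rfl⟩ | ⟨rfl, rfl⟩
        · exact ⟨hcl p ⟨hp, hpA⟩ hpt q ⟨hq, hA p hpA q h⟩ h, hA p hpA q h⟩
        · exact absurd hpt hxt
        · exact absurd hpA hv)
      exact fun w hw => (this hw.1).1
  · intro a b hab
    exact (h2 a b hab).mono Set.inter_subset_left Set.inter_subset_left
  · intro a b hab
    obtain ⟨u, hu, w, hw, huw⟩ := h3 a b hab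
    rcases hG' u w huw with h | ⟨rfl, rfl⟩ | ⟨rfl, rfl⟩
    · by_cases huA : u ∈ A
      · exact ⟨u, ⟨hu, huA⟩, w, ⟨hw, hA u huA w h⟩, h⟩
      · exact absurd (same a b (cross a ⟨u, hu, huA⟩) (cross b ⟨w, hw, hA' u huA w h⟩)) hab.ne
    · exact absurd (same a b hu (cross b ⟨w, hw, hv⟩)) hab.ne
    · exact absurd (same a b (cross a ⟨u, hu, hv⟩) hw) hab.ne

/-- The robustness needed of `H`. Suppose each vertex carries at least one of two colours `c`, `d`,
and either only a vertex `p = q` may carry both and no edge joins a purely `c`-coloured vertex to a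
purely `d`-coloured one, or no vertex carries both and only the edge `pq` joins two such vertices.
Then one of the colours is carried by all vertices. -/
def Robust {α : Type*} (H : SimpleGraph α) : Prop :=
  ∀ (c d : α → Prop) (p q : α), (∀ i, c i ∨ d i) → (∀ i, c i → d i → i = p ∧ p = q) →
    (∀ i j, H.Adj i j → ¬ d i → ¬ c j → i = p ∧ j = q ∧ p ≠ q) → (∀ i, c i) ∨ (∀ i, d i)

theorem robust_K5 : Robust (completeGraph (Fin 5)) := by
  intro c d p q h1 h2 h3
  by_contra hcon
  push Not at hcon
  obtain ⟨⟨j, hj⟩, i, hi⟩ := hcon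
  have hij : i ≠ j := by
    rintro rfl
    rcases h1 i with h | h <;> contradiction
  obtain ⟨rfl, rfl, hpq⟩ := h3 i j hij hi hj
  obtain ⟨k, hki, hkj⟩ : ∃ k : Fin 5, k ≠ i ∧ k ≠ j := by
    have : ∀ i j : Fin 5, ∃ k : Fin 5, k ≠ i ∧ k ≠ j := by decide
    exact this i j
  by_cases hck : c k
  · by_cases hdk : d k
    · exact hki (h2 k hck hdk).1
    · exact hki (h3 k j hkj hdk hj).1
  · exact hkj (h3 i k hki.symm hi hck).2.1

theorem robust_K33 : Robust (completeBipartiteGraph (Fin 3) (Fin 3)) := by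
  intro c d p q h1 h2 h3
  have l : ∀ i j : Fin 3, (completeBipartiteGraph (Fin 3) (Fin 3)).Adj (Sum.inl i) (Sum.inr j) := by
    simp
  have l1 := fun i j => h3 _ _ (l i j)
  have l2 := fun i j => h3 _ _ (l i j).symm
  by_contra hcon
  push Not at hcon
  obtain ⟨⟨j, hj⟩, i, hi⟩ := hcon
  have e1 : ∀ a b : Fin 3, ∃ k : Fin 3, k ≠ a ∧ k ≠ b := by decide
  rcases i with i | i <;> rcases j with j | j
  · have a0 := l1 i 0; have a1 := l1 i 1; have b0 := l2 0 j; have b1 := l2 1 j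
    have := h2 (Sum.inr 0); have := h2 (Sum.inr 1)
    grind
  · obtain ⟨k, hk, -⟩ := e1 i i
    obtain ⟨m, hm, -⟩ := e1 j j
    have := l1 i j; have := l1 k j; have := l1 i m; have := l2 m k
    have := h2 (Sum.inl k); have := h2 (Sum.inr m)
    grind
  · obtain ⟨k, hk, -⟩ := e1 i i
    obtain ⟨m, hm, -⟩ := e1 j j
    have := l2 i j; have := l2 k j; have := l2 i m; have := l1 m k
    have := h2 (Sum.inr k); have := h2 (Sum.inl m)
    grind
  · have a0 := l2 i 0; have a1 := l2 i 1; have b0 := l1 0 j; have b1 := l1 1 j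
    have := h2 (Sum.inl 0); have := h2 (Sum.inl 1)
    grind

/-- Adding an edge `xv` between two components preserves planarity. For a minor model in the new
graph, colour each vertex of the minor by the sides (the component of `x`, or the rest) that its
branch set meets; only the branch sets of `x` and `v` are affected by the new edge, so by robustness
all branch sets meet one side, and the model retracts to it. -/
theorem IsPlanar.join {V : Type*} {G G' : SimpleGraph V} (hG : IsPlanar G) {x v : V}
    (hxv : ¬ G.Reachable x v)
    (hG' : ∀ u w, G'.Adj u w → G.Adj u w ∨ (u = x ∧ w = v) ∨ (u = v ∧ w = x)) :
    IsPlanar G' := by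
  have key : ∀ {α : Type} (H : SimpleGraph α), Nonempty α → Robust H → IsMinor H G' →
      IsMinor H G := by
    rintro α H ⟨a0⟩ hrob ⟨f, h1, h2, h3⟩
    classical
    let A : Set V := {w | G.Reachable x w}
    have hx : x ∈ A := Reachable.refl x
    have hv : v ∉ A := hxv
    have hA : ∀ u ∈ A, ∀ w, G.Adj u w → w ∈ A := fun u hu w huw =>
      Reachable.trans hu huw.reachable
    have hAc : ∀ u ∈ Aᶜ, ∀ w, G.Adj u w → w ∈ Aᶜ := fun u hu w huw hw =>
      hu (hA w hw u huw.symm)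
    have uniq : ∀ z a b, z ∈ f a → z ∈ f b → a = b := by
      intro z a b ha hb
      by_contra hab
      exact Set.disjoint_left.1 (h2 a b hab) ha hb
    have hidx : ∀ z, ∃ p, ∀ a, z ∈ f a → a = p := by
      intro z
      by_cases h : ∃ a, z ∈ f a
      · obtain ⟨a, ha⟩ := h
        exact ⟨a, fun b hb => uniq z b a hb ha⟩
      · exact ⟨a0, fun a ha => absurd ⟨a, ha⟩ h⟩
    obtain ⟨p, hp⟩ := hidx x
    obtain ⟨q, hq⟩ := hidx v
    have h1' := h1
    simp only [induce_connected_iff] at h1'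
    have cross : ∀ i, (∃ u ∈ f i, u ∈ A) → (∃ u ∈ f i, u ∈ Aᶜ) → x ∈ f i ∧ v ∈ f i := by
      rintro i ⟨u, hu, huA⟩ ⟨w, hw, hwA⟩
      by_contra hno
      refine hwA ((h1' i).2 A ⟨u, hu, huA⟩ ?_ hw)
      intro r hr hrA s hs hrs
      rcases hG' r s hrs with h | ⟨rfl, rfl⟩ | ⟨rfl, rfl⟩
      · exact hA r hrA s h
      · exact absurd ⟨hr, hs⟩ hno
      · exact absurd hrA hv
    have := hrob (fun i => ∃ u ∈ f i, u ∈ A) (fun i => ∃ u ∈ f i, u ∈ Aᶜ) p q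
      (by
        intro i
        obtain ⟨u, hu⟩ := (h1' i).1
        by_cases huA : u ∈ A
        · exact Or.inl ⟨u, hu, huA⟩
        · exact Or.inr ⟨u, hu, huA⟩)
      (by
        intro i hi hi'
        obtain ⟨hxi, hvi⟩ := cross i hi hi'
        exact ⟨hp i hxi, (hp i hxi).symm.trans (hq i hvi)⟩)
      (by
        intro i j hij hi hj
        push Not at hi hj
        obtain ⟨u, hu, w, hw, huw⟩ := h3 i j hij
        have huA : u ∈ A := by simpa using hi u hu
        have hwA := hj w hw
        rcases hG' u w huw with h | ⟨rfl, rfl⟩ | ⟨rfl, rfl⟩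
        · exact absurd (hA u huA w h) hwA
        · exact ⟨hp i hu, hq j hw, by rw [← hp i hu, ← hq j hw]; exact hij.ne⟩
        · exact absurd huA hv)
    rcases this with hall | hall
    · exact minor_retract hx hv hA hG' f h1 h2 h3 hall
    · refine minor_retract (A := Aᶜ) (x := v) (v := x) hv (by simpa using hx) hAc ?_ f h1 h2 h3
        hall
      intro u w huw
      rcases hG' u w huw with h | h | h
      · exact Or.inl h
      · exact Or.inr (Or.inr h)
      · exact Or.inr (Or.inl h)
  exact ⟨fun h => hG.1 (key _ ⟨0⟩ robust_K5 h), fun h => hG.2 (key _ ⟨Sum.inl 0⟩ robust_K33 h)⟩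

/-! ### Existence of planar graphs with `3n - 6` edges -/

/-- The join of an edge `{0, 1}` and the path `2, 3, …, n - 1`. -/
def doubleFan (n : ℕ) : SimpleGraph (Fin n) where
  Adj i j := i ≠ j ∧ (i.val < 2 ∨ j.val < 2 ∨ i.val + 1 = j.val ∨ j.val + 1 = i.val)
  symm := ⟨fun i j h => ⟨h.1.symm, by
    rcases h.2 with h | h | h | h
    · exact Or.inr (Or.inl h)
    · exact Or.inl h
    · exact Or.inr (Or.inr (Or.inr h))
    · exact Or.inr (Or.inr (Or.inl h))⟩⟩
  loopless := ⟨fun i h => h.1 rfl⟩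

/-- Consequences of `f` being a minor model of `H` in `doubleFan n`, for indices whose branch sets
avoid `0` and `1` (those branch sets are intervals of the path): no such index has three such
neighbours, and in no nonempty set of such indices does each have two neighbours in the set. -/
theorem doubleFan_model {α : Type} [DecidableEq α] {n : ℕ} {H : SimpleGraph α}
    (f : α → Set (Fin n))
    (h1 : ∀ a, ((doubleFan n).induce (f a)).Connected)
    (h2 : ∀ a b, a ≠ b → Disjoint (f a) (f b))
    (h3 : ∀ a b, H.Adj a b → ∃ u ∈ f a, ∃ w ∈ f b, (doubleFan n).Adj u w) :
    (∀ i j k l, (∀ z ∈ ({i, j, k, l} : Finset α), ∀ u ∈ f z, 2 ≤ u.val) →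
      H.Adj i j → H.Adj i k → H.Adj i l → j ≠ k → j ≠ l → k ≠ l → False) ∧
    (∀ R : Finset α, R.Nonempty → (∀ z ∈ R, ∀ u ∈ f z, 2 ≤ u.val) →
      (∀ i ∈ R, ∃ j ∈ R, ∃ k ∈ R, j ≠ k ∧ H.Adj i j ∧ H.Adj i k) → False) := by
  simp only [induce_connected_iff] at h1
  let up : α → α → Prop := fun i j => ∃ u ∈ f i, ∃ w ∈ f j, u.val + 1 = w.val
  let free : α → Prop := fun i => ∀ u ∈ f i, 2 ≤ u.val
  have hdisj : ∀ i j, i ≠ j → ∀ u ∈ f i, u ∈ f j → False := fun i j hij u hu hu' =>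
    Set.disjoint_left.1 (h2 i j hij) hu hu'
  have adj : ∀ i j, free i → free j → H.Adj i j → up i j ∨ up j i := by
    intro i j hi hj hij
    obtain ⟨u, hu, w, hw, -, huw⟩ := h3 i j hij
    have := hi u hu
    have := hj w hw
    rcases huw with h | h | h | h
    · omega
    · omega
    · exact Or.inl ⟨u, hu, w, hw, h⟩
    · exact Or.inr ⟨w, hw, u, hu, h⟩
  have below : ∀ i j, free i → i ≠ j → ∀ u ∈ f i, ∀ w ∈ f j, u.val + 1 = w.val →
      ∀ z ∈ f i, z ≤ u := by
    intro i j hi hij u hu w hw huw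
    refine (h1 i).2 {z | z ≤ u} ⟨u, hu, le_refl u⟩ ?_
    rintro p hp hpu q hq ⟨-, hpq⟩
    have := hi p hp
    have := hi q hq
    have hqw : q ≠ w := by
      rintro rfl
      exact hdisj i j hij q hq hw
    simp only [Set.mem_ofPred_eq, Fin.le_def, ne_eq, Fin.ext_iff] at hpu hqw ⊢
    omega
  have above : ∀ i j, free j → i ≠ j → ∀ u ∈ f i, ∀ w ∈ f j, u.val + 1 = w.val →
      ∀ z ∈ f j, w ≤ z := by
    intro i j hj hij u hu w hw huw
    refine (h1 j).2 {z | w ≤ z} ⟨w, hw, le_refl w⟩ ?_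
    rintro p hp hpu q hq ⟨-, hpq⟩
    have := hj p hp
    have := hj q hq
    have hqu : q ≠ u := by
      rintro rfl
      exact hdisj i j hij q hu hq
    simp only [Set.mem_ofPred_eq, Fin.le_def, ne_eq, Fin.ext_iff] at hpu hqu ⊢
    omega
  have up_unique : ∀ i j k, free i → i ≠ j → i ≠ k → up i j → up i k → j = k := by
    rintro i j k hi hij hik ⟨u, hu, w, hw, huw⟩ ⟨u', hu', w', hw', huw'⟩
    by_contra hjk
    have a := below i j hi hij u hu w hw huw u' hu'
    have b := below i k hi hik u' hu' w' hw' huw' u hu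
    have : w = w' := by
      rw [Fin.le_def] at a b
      exact Fin.ext (by omega)
    subst this
    exact hdisj j k hjk w hw hw'
  have down_unique : ∀ i j k, free i → i ≠ j → i ≠ k → up j i → up k i → j = k := by
    rintro i j k hi hij hik ⟨u, hu, w, hw, huw⟩ ⟨u', hu', w', hw', huw'⟩
    by_contra hjk
    have a := above j i hi hij.symm u hu w hw huw w' hw'
    have b := above k i hi hik.symm u' hu' w' hw' huw' w hw
    have : u = u' := by
      rw [Fin.le_def] at a b
      exact Fin.ext (by omega)
    subst this
    exact hdisj j k hjk u hu hu'
  constructor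
  · intro i j k l hfree hij hik hil hjk hjl hkl
    have fi : free i := hfree i (by simp)
    have a := adj i j fi (hfree j (by simp)) hij
    have b := adj i k fi (hfree k (by simp)) hik
    have c := adj i l fi (hfree l (by simp)) hil
    rcases a with a | a <;> rcases b with b | b
    · exact hjk (up_unique i j k fi hij.ne hik.ne a b)
    · rcases c with c | c
      · exact hjl (up_unique i j l fi hij.ne hil.ne a c)
      · exact hkl (down_unique i k l fi hik.ne hil.ne b c)
    · rcases c with c | c
      · exact hkl (up_unique i k l fi hik.ne hil.ne b c)
      · exact hjl (down_unique i j l fi hij.ne hil.ne a c)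
    · exact hjk (down_unique i j k fi hij.ne hik.ne a b)
  · intro R hR hfree htwo
    have hne : ∀ i, ∃ u, u ∈ f i := fun i => (h1 i).1
    choose e he using hne
    obtain ⟨i, hi, hmax⟩ := R.exists_max_image e hR
    obtain ⟨j, hj, k, hk, hjk, hij, hik⟩ := htwo i hi
    have fi : free i := hfree i hi
    have top : ∀ j ∈ R, i ≠ j → ¬ up i j := by
      rintro j hj hij ⟨u, hu, w, hw, huw⟩
      have a := below i j fi hij u hu w hw huw (e i) (he i)
      have b := above i j (hfree j hj) hij u hu w hw huw (e j) (he j)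
      have c := hmax j hj
      rw [Fin.le_def] at a b c
      omega
    have a := (adj i j fi (hfree j hj) hij).resolve_left (top j hj hij.ne)
    have b := (adj i k fi (hfree k hk) hik).resolve_left (top k hk hik.ne)
    exact hjk (down_unique i j k fi hij.ne hik.ne a b)

theorem doubleFan_planar (n : ℕ) : IsPlanar (doubleFan n) := by
  -- the branch sets meeting `{0, 1}` have at most two indices `p`, `q`
  have touched : ∀ {α : Type} (a0 : α) (f : α → Set (Fin n)),
      (∀ a b, a ≠ b → Disjoint (f a) (f b)) →
      ∃ p q, ∀ a, a ≠ p → a ≠ q → ∀ u ∈ f a, 2 ≤ u.val := by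
    intro α a0 f h2
    have hidx : ∀ z : ℕ, ∃ p, ∀ a, (∃ u ∈ f a, u.val = z) → a = p := by
      intro z
      by_cases h : ∃ a, ∃ u ∈ f a, u.val = z
      · obtain ⟨a, u, hu, hz⟩ := h
        refine ⟨a, ?_⟩
        rintro b ⟨w, hw, hwz⟩
        by_contra hba
        have : w = u := Fin.ext (hwz.trans hz.symm)
        subst this
        exact Set.disjoint_left.1 (h2 b a hba) hw hu
      · exact ⟨a0, fun a ha => absurd ⟨a, ha⟩ h⟩
    obtain ⟨p, hp⟩ := hidx 0
    obtain ⟨q, hq⟩ := hidx 1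
    refine ⟨p, q, fun a hap haq u hu => ?_⟩
    by_contra hlt
    have : u.val = 0 ∨ u.val = 1 := by omega
    rcases this with h | h
    · exact hap (hp a ⟨u, hu, h⟩)
    · exact haq (hq a ⟨u, hu, h⟩)
  constructor
  · rintro ⟨f, h1, h2, h3⟩
    obtain ⟨p, q, hpq⟩ := touched 0 f h2
    obtain ⟨-, hcyc⟩ := doubleFan_model f h1 h2 h3
    have : ∀ p q : Fin 5, ∃ a b c : Fin 5, a ≠ b ∧ a ≠ c ∧ b ≠ c ∧
        (a ≠ p ∧ a ≠ q) ∧ (b ≠ p ∧ b ≠ q) ∧ c ≠ p ∧ c ≠ q := by decide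
    obtain ⟨a, b, c, hab, hac, hbc, ha, hb, hc⟩ := this p q
    refine hcyc {a, b, c} (by simp) ?_ ?_
    · intro z hz
      simp only [Finset.mem_insert, Finset.mem_singleton] at hz
      rcases hz with rfl | rfl | rfl
      · exact hpq _ ha.1 ha.2
      · exact hpq _ hb.1 hb.2
      · exact hpq _ hc.1 hc.2
    · intro i hi
      simp only [Finset.mem_insert, Finset.mem_singleton] at hi
      rcases hi with rfl | rfl | rfl
      · exact ⟨b, by simp, c, by simp, hbc, hab, hac⟩
      · exact ⟨a, by simp, c, by simp, hac, hab.symm, hbc⟩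
      · exact ⟨a, by simp, b, by simp, hab, hac.symm, hbc.symm⟩
  · rintro ⟨f, h1, h2, h3⟩
    obtain ⟨p, q, hpq⟩ := touched (Sum.inl 0) f h2
    obtain ⟨hstar, hcyc⟩ := doubleFan_model f h1 h2 h3
    have one : ∀ p q : Fin 3, ∃ k, k ≠ p ∧ k ≠ q := by decide
    have two : ∀ p : Fin 3, ∃ a b, a ≠ b ∧ a ≠ p ∧ b ≠ p := by decide
    have cyc : ∀ p q : Fin 3, (∀ i, i ≠ p → ∀ u ∈ f (Sum.inl i), 2 ≤ u.val) →
        (∀ i, i ≠ q → ∀ u ∈ f (Sum.inr i), 2 ≤ u.val) → False := by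
      intro p q hp hq
      obtain ⟨a, b, hab, ha, hb⟩ := two p
      obtain ⟨c, d, hcd, hc, hd⟩ := two q
      refine hcyc {Sum.inl a, Sum.inl b, Sum.inr c, Sum.inr d} (by simp) ?_ ?_
      · intro z hz
        simp only [Finset.mem_insert, Finset.mem_singleton] at hz
        rcases hz with rfl | rfl | rfl | rfl
        · exact hp _ ha
        · exact hp _ hb
        · exact hq _ hc
        · exact hq _ hd
      · intro i hi
        simp only [Finset.mem_insert, Finset.mem_singleton] at hi
        rcases hi with rfl | rfl | rfl | rfl
        · exact ⟨Sum.inr c, by simp, Sum.inr d, by simp, by simpa using hcd, by simp, by simp⟩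
        · exact ⟨Sum.inr c, by simp, Sum.inr d, by simp, by simpa using hcd, by simp, by simp⟩
        · exact ⟨Sum.inl a, by simp, Sum.inl b, by simp, by simpa using hab, by simp, by simp⟩
        · exact ⟨Sum.inl a, by simp, Sum.inl b, by simp, by simpa using hab, by simp, by simp⟩
    rcases p with p | p <;> rcases q with q | q
    · obtain ⟨k, hkp, hkq⟩ := one p q
      refine hstar (Sum.inl k) (Sum.inr 0) (Sum.inr 1) (Sum.inr 2) ?_ (by simp) (by simp) (by simp)
        (by simp) (by simp) (by simp)
      intro z hz
      simp only [Finset.mem_insert, Finset.mem_singleton] at hz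
      exact hpq z (by grind) (by grind)
    · exact cyc p q (fun i hi => hpq _ (by simpa using hi) (by simp))
        (fun i hi => hpq _ (by simp) (by simpa using hi))
    · exact cyc q p (fun i hi => hpq _ (by simp) (by simpa using hi))
        (fun i hi => hpq _ (by simpa using hi) (by simp))
    · obtain ⟨k, hkp, hkq⟩ := one p q
      refine hstar (Sum.inr k) (Sum.inl 0) (Sum.inl 1) (Sum.inl 2) ?_ (by simp) (by simp) (by simp)
        (by simp) (by simp) (by simp)
      intro z hz
      simp only [Finset.mem_insert, Finset.mem_singleton] at hz
      exact hpq z (by grind) (by grind)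

theorem doubleFan_edgeCount (n : ℕ) (hn : 3 ≤ n) : 3 * n ≤ edgeCount (doubleFan n) + 6 := by
  let g : Fin (n - 1) ⊕ Fin (n - 2) ⊕ Fin (n - 3) → Sym2 (Fin n) := fun t =>
    match t with
    | .inl i => s(⟨0, by omega⟩, ⟨i + 1, by omega⟩)
    | .inr (.inl i) => s(⟨1, by omega⟩, ⟨i + 2, by omega⟩)
    | .inr (.inr i) => s(⟨i + 2, by omega⟩, ⟨i + 3, by omega⟩)
  have hg : Function.Injective g := by
    rintro (i | i | i) (j | j | j) hij <;>
      simp only [g, Sym2.eq_iff, Fin.mk.injEq] at hij <;>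
      first
        | (exfalso; omega)
        | (congr; apply Fin.ext; omega)
  have hsub : Set.range g ⊆ (doubleFan n).edgeSet := by
    rintro _ ⟨i | i | i, rfl⟩ <;> simp [g, doubleFan]
  have h := Set.ncard_le_ncard hsub (Set.toFinite _)
  have hc : (Set.range g).ncard = 3 * n - 6 := by
    rw [← Set.image_univ, Set.ncard_image_of_injective _ hg, Set.ncard_univ]
    simp only [Nat.card_eq_fintype_card, Fintype.card_sum, Fintype.card_fin]
    omega
  rw [hc] at h
  unfold edgeCount
  omega

theorem planarSet_nonempty (n m : ℕ) (hn : 3 ≤ n) (hm : m + 6 ≤ 3 * n) :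
    (planarSet n m).Nonempty := by
  have := doubleFan_edgeCount n hn
  obtain ⟨H, hH, hHm⟩ := exists_subgraph_edgeCount (doubleFan n) m (by omega)
  exact ⟨H, (doubleFan_planar n).mono hH, hHm⟩

/-! ### The switching -/

/-- The graph obtained from `G` by replacing the edge `xy` with the edge `xv`. -/
def moveEdge {V : Type} (G : SimpleGraph V) (x y v : V) : SimpleGraph V :=
  SimpleGraph.fromEdgeSet (insert s(x, v) (G.edgeSet \ {s(x, y)}))

theorem moveEdge_adj {V : Type} (G : SimpleGraph V) {x y v u w : V} :
    (moveEdge G x y v).Adj u w ↔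
      (s(u, w) = s(x, v) ∨ (G.Adj u w ∧ s(u, w) ≠ s(x, y))) ∧ u ≠ w := by
  simp [moveEdge, SimpleGraph.fromEdgeSet_adj]

theorem moveEdge_edgeSet {V : Type} (G : SimpleGraph V) {x y v : V} (hxv : x ≠ v) :
    (moveEdge G x y v).edgeSet = insert s(x, v) (G.edgeSet \ {s(x, y)}) := by
  rw [moveEdge, SimpleGraph.edgeSet_fromEdgeSet, sdiff_eq_left, Set.disjoint_left]
  intro e he hd
  rcases he with rfl | he
  · exact hxv (by simpa using hd)
  · exact G.not_isDiag_of_mem_edgeSet he.1 hd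

theorem moveEdge_moveEdge {V : Type} (G : SimpleGraph V) {x y v : V} (hxv : x ≠ v)
    (hxy : G.Adj x y) (hnadj : ¬ G.Adj x v) : moveEdge (moveEdge G x y v) x v y = G := by
  rw [← SimpleGraph.edgeSet_inj, moveEdge_edgeSet _ hxy.ne, moveEdge_edgeSet _ hxv]
  have h1 : s(x, y) ∈ G.edgeSet := hxy
  have h2 : s(x, v) ∉ G.edgeSet := hnadj
  ext e
  simp only [Set.mem_insert_iff, Set.mem_sdiff, Set.mem_singleton_iff]
  constructor
  · rintro (rfl | ⟨rfl | h, h'⟩)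
    · exact h1
    · exact absurd rfl h'
    · exact h.1
  · intro he
    by_cases h : e = s(x, y)
    · exact Or.inl h
    · exact Or.inr ⟨Or.inr ⟨he, h⟩, fun h' => h2 (h' ▸ he)⟩

/-- In a disconnected planar graph, the edge `xy` of the triangle witnessing that `x` is a good
vertex can be moved to an edge `xv`, with `v` a vertex of low degree in another component.
The edge `xv` is then in no triangle, which makes `v` easy to recover; and `y` is still
within distance two of `x` along vertices of low degree. -/
theorem exists_switch {V : Type} [Fintype V] (G : SimpleGraph V) (C : ℕ) (hC : 7 ≤ C)
    (hG : IsPlanar G) (hdisc : ¬ G.Connected) (x : V) (hx : x ∈ goodVertices G C) :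
    ∃ (H : SimpleGraph V) (v a y : V), IsPlanar H ∧ edgeCount H = edgeCount G ∧
      (x, v) ∈ sparseDarts H C ∧ H.Adj x a ∧ vertexDegree H a ≤ C ∧ H.Adj a y ∧
      moveEdge H x v y = G := by
  classical
  obtain ⟨hdx, a, y, hxa, hda, hay, hxy⟩ := hx
  have hU : {v | ¬ G.Reachable x v}.Nonempty := by
    by_contra hne
    rw [Set.not_nonempty_iff_eq_empty, Set.eq_empty_iff_forall_notMem] at hne
    have hr : ∀ v, G.Reachable x v := fun v => not_not.1 (hne v)
    have : Nonempty V := ⟨x⟩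
    exact hdisc ⟨fun u w => (hr u).symm.trans (hr w)⟩
  obtain ⟨v, hv, hdv⟩ := exists_low_degree V G hG _ hU
  have hv : ¬ G.Reachable x v := hv
  have hdv : vertexDegree G v ≤ 6 := by
    refine le_trans (Set.ncard_le_ncard ?_ (Set.toFinite _)) hdv
    intro w hw
    have hw : G.Adj v w := hw
    exact ⟨fun h => hv (h.trans hw.symm.reachable), hw⟩
  have hxv : x ≠ v := by
    rintro rfl
    exact hv (SimpleGraph.Reachable.refl _)
  have hnadj : ¬ G.Adj x v := fun h => hv h.reachable
  have hav : a ≠ v := by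
    rintro rfl
    exact hnadj hxa
  have hyv : y ≠ v := by
    rintro rfl
    exact hnadj hxy
  have hadj : ∀ {u w}, (moveEdge G x y v).Adj u w →
      G.Adj u w ∨ (u = x ∧ w = v) ∨ (u = v ∧ w = x) := by
    intro u w h
    rw [moveEdge_adj] at h
    rcases h.1 with h | h
    · exact Or.inr (by simpa using h)
    · exact Or.inl h.1
  have hkeep : ∀ {u w}, G.Adj u w → s(u, w) ≠ s(x, y) → (moveEdge G x y v).Adj u w :=
    fun h h' => (moveEdge_adj G).2 ⟨Or.inr ⟨h, h'⟩, h.ne⟩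
  have hxv' : (moveEdge G x y v).Adj x v := (moveEdge_adj G).2 ⟨Or.inl rfl, hxv⟩
  have hnxy : ¬ (moveEdge G x y v).Adj x y := by
    rw [moveEdge_adj]
    rintro ⟨h | h, -⟩
    · simp only [Sym2.eq_iff] at h
      rcases h with h | h
      · exact hyv h.2
      · exact hxv h.1
    · exact h.2 rfl
  refine ⟨moveEdge G x y v, v, a, y, hG.join hv (fun u w => hadj), ?_, ⟨hxv', ?_, ?_, ?_⟩, ?_, ?_,
    ?_, moveEdge_moveEdge G hxv hxy hnadj⟩
  · have h1 : s(x, y) ∈ G.edgeSet := hxy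
    unfold edgeCount
    rw [moveEdge_edgeSet G hxv, Set.ncard_insert_of_notMem (fun h => hnadj h.1) (Set.toFinite _),
      Set.ncard_sdiff_singleton_add_one h1 (Set.toFinite _)]
  · have hy : y ∈ G.neighborSet x := hxy
    have hsub : (moveEdge G x y v).neighborSet x ⊆ insert v (G.neighborSet x \ {y}) := by
      intro w hw
      have hw : (moveEdge G x y v).Adj x w := hw
      rcases hadj hw with h | h | h
      · refine Or.inr ⟨h, ?_⟩
        rintro rfl
        exact hnxy hw
      · exact Or.inl h.2
      · exact absurd h.1 hxv
    have h := Set.ncard_le_ncard hsub (Set.toFinite _)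
    rw [Set.ncard_insert_of_notMem (fun h => hnadj h.1) (Set.toFinite _),
      Set.ncard_sdiff_singleton_add_one hy (Set.toFinite _)] at h
    exact h.trans hdx
  · have hsub : (moveEdge G x y v).neighborSet v ⊆ insert x (G.neighborSet v) := by
      intro w hw
      rcases hadj hw with h | h | h
      · exact Or.inr h
      · exact absurd h.1.symm hxv
      · exact Or.inl h.2
    have h := (Set.ncard_le_ncard hsub (Set.toFinite _)).trans (Set.ncard_insert_le _ _)
    unfold vertexDegree at hdv
    exact h.trans (by omega)
  · intro z hz hz'
    rcases hadj hz with h | h | h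
    · rcases hadj hz' with h' | h' | h'
      · exact hv (h.reachable.trans h'.symm.reachable)
      · exact hxv h'.1.symm
      · exact h.ne h'.2.symm
    · exact hz'.ne h.2.symm
    · exact hxv h.1
  · refine hkeep hxa ?_
    intro h
    simp only [Sym2.eq_iff] at h
    rcases h with h | h
    · exact hay.ne h.2
    · exact hxy.ne h.1
  · have hsub : (moveEdge G x y v).neighborSet a ⊆ G.neighborSet a := by
      intro w hw
      rcases hadj hw with h | h | h
      · exact h
      · exact absurd h.1.symm hxa.ne
      · exact absurd h.1 hav
    exact (Set.ncard_le_ncard hsub (Set.toFinite _)).trans hda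
  · refine hkeep hay ?_
    intro h
    simp only [Sym2.eq_iff] at h
    rcases h with h | h
    · exact hxa.ne h.1.symm
    · exact hay.ne h.1

/-! ### Counting -/

/-- Double counting of the switchings: each disconnected graph admits at least `L` of them, and
each outcome, together with its sparse dart `(x, v)` and the path `x, a, y`, arises at most once. -/
theorem disconnected_bound (n m C L D : ℕ) (hC : 7 ≤ C)
    (hL : ∀ G ∈ planarSet n m, L ≤ (goodVertices G C).ncard)
    (hD : ∀ G ∈ planarSet n m, (sparseDarts G C).ncard ≤ D) :
    {G ∈ planarSet n m | ¬ G.Connected}.ncard * L ≤ C * (C * (D * (planarSet n m).ncard)) := by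
  classical
  let V := Fin n
  let T1 : Set (SimpleGraph V × (V × V)) := {t | t.1 ∈ planarSet n m ∧ t.2 ∈ sparseDarts t.1 C}
  let T2 : Set ((SimpleGraph V × (V × V)) × V) :=
    {t | t.1 ∈ T1 ∧ t.1.1.Adj t.1.2.1 t.2 ∧ vertexDegree t.1.1 t.2 ≤ C}
  let T3 : Set (((SimpleGraph V × (V × V)) × V) × V) := {t | t.1 ∈ T2 ∧ t.1.1.1.Adj t.1.2 t.2}
  have b1 : T1.ncard ≤ D * (planarSet n m).ncard := by
    refine ncard_le_mul_of_fibers _ _ Prod.fst D (fun t ht => ht.1) ?_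
    intro H hH
    refine le_trans (le_trans (Set.ncard_le_ncard (t := (fun p => (H, p)) '' sparseDarts H C) ?_
      (Set.toFinite _)) (Set.ncard_image_le (Set.toFinite _))) (hD H hH)
    rintro ⟨H', p⟩ ⟨ht, rfl⟩
    exact ⟨p, ht.2, rfl⟩
  have b2 : T2.ncard ≤ C * T1.ncard := by
    refine ncard_le_mul_of_fibers _ _ Prod.fst C (fun t ht => ht.1) ?_
    intro s hs
    refine le_trans (le_trans (Set.ncard_le_ncard (t := (fun p => (s, p)) '' s.1.neighborSet s.2.1)
      ?_ (Set.toFinite _)) (Set.ncard_image_le (Set.toFinite _))) hs.2.2.1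
    rintro ⟨s', p⟩ ⟨ht, rfl⟩
    exact ⟨p, ht.2.1, rfl⟩
  have b3 : T3.ncard ≤ C * T2.ncard := by
    refine ncard_le_mul_of_fibers _ _ Prod.fst C (fun t ht => ht.1) ?_
    intro s hs
    refine le_trans (le_trans (Set.ncard_le_ncard (t := (fun p => (s, p)) '' s.1.1.neighborSet s.2)
      ?_ (Set.toFinite _)) (Set.ncard_image_le (Set.toFinite _))) hs.2.2
    rintro ⟨s', p⟩ ⟨ht, rfl⟩
    exact ⟨p, ht.2, rfl⟩
  have hemb : ∀ G : {G // G ∈ planarSet n m ∧ ¬ G.Connected}, ∃ e : Fin L → V,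
      Function.Injective e ∧ ∀ i, e i ∈ goodVertices G.1 C := by
    rintro ⟨G, hG, -⟩
    have h := hL G hG
    rw [← Nat.card_coe_set_eq, Nat.card_eq_fintype_card] at h
    obtain ⟨e⟩ := Function.Embedding.nonempty_of_card_le
      (α := Fin L) (β := goodVertices G C) (by simpa using h)
    exact ⟨fun i => (e i).1, fun i j hij => e.injective (Subtype.ext hij), fun i => (e i).2⟩
  choose e heinj hegood using hemb
  have hsw : ∀ s : {G // G ∈ planarSet n m ∧ ¬ G.Connected} × Fin L, ∃ t : T3,
      t.1.1.1.2.1 = e s.1 s.2 ∧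
        moveEdge t.1.1.1.1 t.1.1.1.2.1 t.1.1.1.2.2 t.1.2 = s.1.1 := by
    rintro ⟨⟨G, hG, hdisc⟩, i⟩
    obtain ⟨H, v, a, y, hH, hHm, h1, h2, h3, h4, h5⟩ :=
      exists_switch G C hC hG.1 hdisc _ (hegood ⟨G, hG, hdisc⟩ i)
    exact ⟨⟨(((H, (_, v)), a), y), ⟨⟨⟨⟨hH, hHm.trans hG.2⟩, h1⟩, h2, h3⟩, h4⟩⟩, rfl, h5⟩
  choose F hF1 hF2 using hsw
  have hinj : Function.Injective F := by
    rintro ⟨G, i⟩ ⟨G', j⟩ hFF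
    have hG : G = G' := by
      apply Subtype.ext
      rw [← hF2 (G, i), ← hF2 (G', j), hFF]
    subst hG
    have : e G i = e G j := by
      rw [← hF1 (G, i), ← hF1 (G, j), hFF]
    rw [heinj G this]
  have hcard := Nat.card_le_card_of_injective F hinj
  rw [Nat.card_prod, Nat.card_fin, Nat.card_coe_set_eq] at hcard
  have : {G ∈ planarSet n m | ¬ G.Connected}.ncard =
      Nat.card {G // G ∈ planarSet n m ∧ ¬ G.Connected} := (Nat.card_coe_set_eq _).symm
  rw [this]
  exact hcard.trans (b3.trans (Nat.mul_le_mul_left C (b2.trans (Nat.mul_le_mul_left C b1))))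

/-- An explicit bound on the number of disconnected graphs, with constants given by `C = 1224`,
valid when `3n - m` is a small fraction of `n`. -/
theorem disconnected_mul_le (n m C d : ℕ) (hC : C = 1224) (hd : m + d = 3 * n)
    (hsmall : 2 * ((2 * C ^ 2 + 2) * d) ≤ n) (hlarge : 4 * C ≤ n) :
    {G ∈ planarSet n m | ¬ G.Connected}.ncard * n ≤
      8 * C ^ 5 * d * (planarSet n m).ncard := by
  have hCpos : 0 < 2 * C := by omega
  have hdiv := Nat.div_add_mod n (2 * C)
  have hmod := Nat.mod_lt n hCpos
  generalize hLdef : n / (2 * C) = L at hdiv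
  have key := disconnected_bound n m C L (2 * C ^ 2 * d) (by omega) ?_ ?_
  · have hn : n ≤ 4 * C * L := by nlinarith
    calc _ ≤ {G ∈ planarSet n m | ¬ G.Connected}.ncard * (4 * C * L) := Nat.mul_le_mul_left _ hn
      _ = 4 * C * ({G ∈ planarSet n m | ¬ G.Connected}.ncard * L) := by ring
      _ ≤ 4 * C * (C * (C * (2 * C ^ 2 * d * (planarSet n m).ncard))) :=
        Nat.mul_le_mul_left _ key
      _ = _ := by ring
  · rintro G ⟨hG, hm⟩
    have h := goodVertices_bound C (by omega) (Fin n) G hG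
    rw [hm, Fintype.card_fin, ← hd] at h
    have h2 : n ≤ 2 * C * (goodVertices G C).ncard := by nlinarith
    have h3 : 2 * C * L ≤ 2 * C * (goodVertices G C).ncard := by omega
    exact Nat.le_of_mul_le_mul_left h3 hCpos
  · rintro G ⟨hG, hm⟩
    have h := sparseDarts_bound C n (Fin n) G (by simp) hG
    rw [hm, ← hd] at h
    nlinarith

theorem connected_whp (m : ℕ → ℕ)
    (hub : ∀ᶠ n : ℕ in atTop, (m n : ℝ) ≤ 3 * (n : ℝ) - 6)
    (ho : Tendsto (fun n : ℕ => (3 * (n : ℝ) - (m n : ℝ)) / (n : ℝ)) atTop (nhds 0)) :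
    Tendsto (fun n : ℕ => planarProb n (m n) fun G => G.Connected) atTop (nhds 1) := by
  obtain ⟨C, hC⟩ : ∃ C : ℕ, C = 1224 := ⟨_, rfl⟩
  have hlim : Tendsto (fun n : ℕ => 1 - 8 * (C : ℝ) ^ 5 * ((3 * (n : ℝ) - (m n : ℝ)) / (n : ℝ)))
      atTop (nhds 1) := by
    simpa using (ho.const_mul (8 * (C : ℝ) ^ 5)).const_sub 1
  have hε : (0 : ℝ) < 1 / (2 * (2 * (C : ℝ) ^ 2 + 2)) := by positivity
  refine tendsto_of_tendsto_of_tendsto_of_le_of_le' hlim tendsto_const_nhds ?_ ?_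
  · filter_upwards [hub, ho.eventually (gt_mem_nhds hε), eventually_ge_atTop (4 * C)]
      with n hn hsmall hlarge
    have hnpos : (0 : ℝ) < n := by exact_mod_cast (by omega : 0 < n)
    have hm : m n + 6 ≤ 3 * n := by
      have : (m n : ℝ) + 6 ≤ 3 * n := by linarith
      exact_mod_cast this
    obtain ⟨d, hd⟩ : ∃ d, m n + d = 3 * n := ⟨3 * n - m n, by omega⟩
    have hdR : 3 * (n : ℝ) - m n = d := by
      have : (m n : ℝ) + d = 3 * n := by exact_mod_cast hd
      linarith
    rw [hdR, div_lt_div_iff₀ hnpos (by positivity)] at hsmall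
    have hs : 2 * ((2 * C ^ 2 + 2) * d) ≤ n := by
      have : 2 * ((2 * (C : ℝ) ^ 2 + 2) * d) ≤ n := by linarith
      exact_mod_cast this
    have key := disconnected_mul_le n (m n) C d hC hd hs hlarge
    have hne := planarSet_nonempty n (m n) (by omega) hm
    have hpos : (0 : ℝ) < (planarSet n (m n)).ncard := by
      exact_mod_cast (Set.ncard_pos (Set.toFinite _)).2 hne
    have hsplit : (planarSet n (m n)).ncard ≤ {G ∈ planarSet n (m n) | G.Connected}.ncard +
        {G ∈ planarSet n (m n) | ¬ G.Connected}.ncard := by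
      refine (Set.ncard_le_ncard ?_ (Set.toFinite _)).trans (Set.ncard_union_le _ _)
      intro G hG
      by_cases h : G.Connected
      · exact Or.inl ⟨hG, h⟩
      · exact Or.inr ⟨hG, h⟩
    have key' : ({G ∈ planarSet n (m n) | ¬ G.Connected}.ncard : ℝ) * n ≤
        8 * (C : ℝ) ^ 5 * d * (planarSet n (m n)).ncard := by exact_mod_cast key
    have hsplit' : ((planarSet n (m n)).ncard : ℝ) ≤
        ({G ∈ planarSet n (m n) | G.Connected}.ncard : ℝ) +
        ({G ∈ planarSet n (m n) | ¬ G.Connected}.ncard : ℝ) := by exact_mod_cast hsplit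
    have hdisc : ({G ∈ planarSet n (m n) | ¬ G.Connected}.ncard : ℝ) ≤
        8 * (C : ℝ) ^ 5 * (d / n) * (planarSet n (m n)).ncard := by
      have : 8 * (C : ℝ) ^ 5 * (d / n) * (planarSet n (m n)).ncard =
          8 * (C : ℝ) ^ 5 * d * (planarSet n (m n)).ncard / n := by ring
      rw [this, le_div_iff₀ hnpos]
      exact key'
    rw [hdR, planarProb, le_div_iff₀ hpos]
    linarith
  · refine Eventually.of_forall fun n => ?_
    refine div_le_one_of_le₀ ?_ (Nat.cast_nonneg _)
    exact_mod_cast Set.ncard_le_ncard (Set.sep_subset _ _) (Set.toFinite _)
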